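/- arXiv:2102.08651 — 3 statements merged into one kernel-verified Lean document; each statement's English description precedes it below -/
import Mathlib

section
/- Let φ be a convex φ-function satisfying condition (H) with η convex, let χ be a kernel (conditions (χ1)–(χ4)) with L satisfying (L1) and (L2), let f ∈ L^{φ+η}(ℝ), and suppose that for a fixed 0 < α < 1 one has w ∫_{|y|>1/w^α} L(wy) dy ≤ M₁ w^{−α₀} as w → +∞, for suitable positive constants M₁, α₀. Then there exist μ > 0 and λ₀ > 0 such that, for every sufficiently large w > 0, I^φ[μ(S_w f − f)] ≤ (‖L‖₁/(3δ m_{0,Π}(L))) ω(f, 1/w^α)_η + (M₁ I^η[λ₀ f]/(3δ m_{0,Π}(L))) w^{−α₀} + (Δ/(3δ)) ω(f, Δ/w)_η + (I^φ[λ₀ f]/3) w^{−θ₀}, where m_{0,Π}(L) := sup_{u∈ℝ} ∑_{k∈ℤ} L(u − t_k) < +∞ and θ₀ > 0 is the constant of condition (χ4). -/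
/-!
The error is split by inserting, for each node, the mean `B k` of `f` over the cell
`[t k / w, t (k+1) / w]` translated so that it starts at `x`. By (χ3),
`|S_w f x - f x|` is at most
`∑ L (w x - t k) ψ |A k - B k| + ∑ L (w x - t k) ψ |B k - f x| + |∑ χ (w x - t k, f x) - f x|`,
where `A k` is the sampled mean. Convexity of `φ` separates the three terms with weight `1/3`.
Jensen's inequality with weights `L (w x - t k)`, of total mass at most `m_{0,Π}(L)`, moves `φ`
inside the two series, condition (H) replaces `φ (C ψ u)` by `η (lam u)`, and Jensen's inequality
for the means moves `η` inside the integrals over the cells (`phi_split_tsum`, `phi_cell_diff_le`,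
`phi_cell_avg_le`).

After integration in `x`, the first series becomes, by translation and disjointness of the cells,
at most `∫ L (w y) (w/δ) ∫ η (lam |f (u + y) - f u|) du dy` (`lintegral_sampled_le`). Splitting at
`|y| = w ^ (-α)` gives the modulus of continuity and a tail term controlled by the modular of
`2 lam f` (`lintegral_split_le`). The second series gives the modulus at `Δ / w` by Tonelli
(`lintegral_average_le`), and the last term is controlled by (χ4) and
`φ (s u) ≤ s φ u` for `s ≤ 1`.

All upper bounds are computed with lower Lebesgue integrals in `[0, ∞]`, so neither measurability
of `S_w f` nor convergence of the dominating series has to be established.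
-/

open MeasureTheory Filter Real Set

noncomputable section

/-- A φ-function: continuous on `[0,∞)` with `φ 0 = 0`, non-decreasing there,
positive for positive arguments, and tending to `+∞` at `+∞`. -/
def IsPhiFun (φ : ℝ → ℝ) : Prop :=
  ContinuousOn φ (Set.Ici 0) ∧ φ 0 = 0 ∧ MonotoneOn φ (Set.Ici 0) ∧
    (∀ u : ℝ, 0 < u → 0 < φ u) ∧ Tendsto φ atTop atTop

/-- Discrete absolute moment of order `β` (ENNReal-valued). -/
def dMoment (t : ℤ → ℝ) (L : ℝ → ℝ) (β : ℝ) : ENNReal :=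
  ⨆ u : ℝ, ∑' k : ℤ, ENNReal.ofReal (L (u - t k) * |u - t k| ^ β)

/-- `m_{0,Π}(L)` as a real number. -/
def m0R (t : ℤ → ℝ) (L : ℝ → ℝ) : ℝ :=
  (⨆ u : ℝ, ∑' k : ℤ, ENNReal.ofReal (L (u - t k))).toReal

/-- The modular functional `I^φ[f] = ∫_ℝ φ(|f(x)|) dx`. -/
def Iph (φ : ℝ → ℝ) (f : ℝ → ℝ) : ℝ := ∫ x : ℝ, φ (|f x|)

/-- Modulus of continuity in the Orlicz space generated by `η`, with parameter `lam`:
`ω(f,d)_η = sup_{|s| ≤ d} I^η[lam (f(·+s) - f(·))]`. -/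
def omegaMod (η : ℝ → ℝ) (lam : ℝ) (f : ℝ → ℝ) (d : ℝ) : ℝ :=
  ⨆ s : {s : ℝ // |s| ≤ d}, ∫ x : ℝ, η (lam * |f (x + (s : ℝ)) - f x|)

/-- The nonlinear sampling Kantorovich operator `S_w` based on the kernel `χ`. -/
def SwOp (t : ℤ → ℝ) (χ : ℝ → ℝ → ℝ) (f : ℝ → ℝ) (w x : ℝ) : ℝ :=
  ∑' k : ℤ, χ (w * x - t k)
    ((w / (t (k + 1) - t k)) * ∫ u in (t k / w)..(t (k + 1) / w), f u)

/-! ### Convexity tools -/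

lemma IsPhiFun.nonneg {φ : ℝ → ℝ} (h : IsPhiFun φ) {u : ℝ} (hu : 0 ≤ u) : 0 ≤ φ u := by
  rcases hu.eq_or_lt with rfl | h0
  · exact h.2.1.ge
  · exact (h.2.2.2.1 u h0).le

lemma IsPhiFun.mono {φ : ℝ → ℝ} (h : IsPhiFun φ) {u v : ℝ} (hu : 0 ≤ u) (huv : u ≤ v) :
    φ u ≤ φ v := h.2.2.1 hu (hu.trans huv) huv

lemma IsPhiFun.continuous_abs {φ : ℝ → ℝ} (h : IsPhiFun φ) {c : ℝ} (hc : 0 ≤ c) :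
    Continuous (fun x : ℝ => φ (c * |x|)) :=
  h.1.comp_continuous (by fun_prop) (fun x => mul_nonneg hc (abs_nonneg x))

lemma IsPhiFun.convexOn_abs {φ : ℝ → ℝ} (h : IsPhiFun φ) (hconv : ConvexOn ℝ (Set.Ici 0) φ)
    {c : ℝ} (hc : 0 ≤ c) : ConvexOn ℝ Set.univ (fun x : ℝ => φ (c * |x|)) := by
  refine ⟨convex_univ, fun x _ y _ a b ha hb hab => ?_⟩
  have h1 := hconv.2 (x := c * |x|) (mul_nonneg hc (abs_nonneg x))
    (y := c * |y|) (mul_nonneg hc (abs_nonneg y)) ha hb hab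
  refine le_trans (h.mono (mul_nonneg hc (abs_nonneg _)) ?_) h1
  have h2 : |a • x + b • y| ≤ a * |x| + b * |y| := by
    refine (abs_add_le _ _).trans ?_
    simp [abs_mul, abs_of_nonneg ha, abs_of_nonneg hb]
  calc c * |a • x + b • y| ≤ c * (a * |x| + b * |y|) := mul_le_mul_of_nonneg_left h2 hc
    _ = a • (c * |x|) + b • (c * |y|) := by simp only [smul_eq_mul]; ring

lemma IsPhiFun.map_mul_le {φ : ℝ → ℝ} (h : IsPhiFun φ) (hconv : ConvexOn ℝ (Set.Ici 0) φ)
    {s u : ℝ} (hs : 0 ≤ s) (hs1 : s ≤ 1) (hu : 0 ≤ u) : φ (s * u) ≤ s * φ u := by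
  have := hconv.2 (x := u) hu (y := 0) (Set.mem_Ici.2 le_rfl) hs (sub_nonneg.2 hs1) (by ring)
  simpa [h.2.1] using this

lemma IsPhiFun.map_add_three_le {φ : ℝ → ℝ} (hconv : ConvexOn ℝ (Set.Ici 0) φ)
    {x y z : ℝ} (hx : 0 ≤ x) (hy : 0 ≤ y) (hz : 0 ≤ z) :
    φ ((x + y + z) / 3) ≤ (φ x + φ y + φ z) / 3 := by
  have h1 := hconv.2 (Set.mem_Ici.2 hx) (Set.mem_Ici.2 hy) (show (0 : ℝ) ≤ 1 / 2 by norm_num)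
    (show (0 : ℝ) ≤ 1 / 2 by norm_num) (by norm_num)
  have h2 := hconv.2 (x := (1 / 2 : ℝ) • x + (1 / 2 : ℝ) • y)
    (by simp only [smul_eq_mul, Set.mem_Ici]; positivity) (Set.mem_Ici.2 hz)
    (show (0 : ℝ) ≤ 2 / 3 by norm_num) (show (0 : ℝ) ≤ 1 / 3 by norm_num) (by norm_num)
  simp only [smul_eq_mul] at h1 h2
  have : (x + y + z) / 3 = 2 / 3 * (1 / 2 * x + 1 / 2 * y) + 1 / 3 * z := by ring
  rw [this]
  linarith

/-- Jensen's inequality for finitely many weights whose sum is at most `m`; the missing mass is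
put at `0`, where `φ` vanishes. -/
lemma IsPhiFun.jensen_finset {φ : ℝ → ℝ} (h : IsPhiFun φ) (hconv : ConvexOn ℝ (Set.Ici 0) φ)
    {ι : Type*} (F : Finset ι) (a b : ι → ℝ) (ha : ∀ k, 0 ≤ a k) (hb : ∀ k, 0 ≤ b k)
    {m : ℝ} (hm : 0 < m) (hF : ∑ k ∈ F, a k ≤ m) :
    φ (m⁻¹ * ∑ k ∈ F, a k * b k) ≤ m⁻¹ * ∑ k ∈ F, a k * φ (b k) := by
  have hs0 : 0 ≤ ∑ k ∈ F, a k := Finset.sum_nonneg fun k _ => ha k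
  rcases hs0.eq_or_lt with h0 | hs
  · have hz : ∀ k ∈ F, a k = 0 := (Finset.sum_eq_zero_iff_of_nonneg fun k _ => ha k).1 h0.symm
    rw [Finset.sum_eq_zero (fun k hk => by rw [hz k hk, zero_mul]),
      Finset.sum_eq_zero (fun k hk => by rw [hz k hk, zero_mul]), mul_zero, h.2.1]
  · set s := ∑ k ∈ F, a k with hsdef
    have hJ := hconv.map_sum_le (t := F) (w := fun k => a k / s) (p := b)
      (fun k _ => div_nonneg (ha k) hs.le)
      (by rw [← Finset.sum_div, ← hsdef, div_self hs.ne']) (fun k _ => hb k)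
    simp only [smul_eq_mul, div_mul_eq_mul_div] at hJ
    rw [← Finset.sum_div, ← Finset.sum_div] at hJ
    have h1 := h.map_mul_le hconv (s := s / m) (u := (∑ k ∈ F, a k * b k) / s)
      (by positivity) ((div_le_one hm).2 hF)
      (div_nonneg (Finset.sum_nonneg fun k _ => mul_nonneg (ha k) (hb k)) hs.le)
    have e1 : m⁻¹ * ∑ k ∈ F, a k * b k = s / m * ((∑ k ∈ F, a k * b k) / s) := by
      field_simp
    rw [e1]
    refine h1.trans ((mul_le_mul_of_nonneg_left hJ (by positivity)).trans (le_of_eq ?_))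
    field_simp

/-- Jensen's inequality for averages over an interval, with an upper bound that is allowed to be
infinite, so that no integrability of `G ∘ g` is required. -/
lemma jensen_interval {G : ℝ → ℝ} (hG : Continuous G) (hGc : ConvexOn ℝ Set.univ G)
    (hG0 : ∀ x, 0 ≤ G x) {a b : ℝ} (hab : a < b) {g : ℝ → ℝ} (hg : IntegrableOn g (Set.Ioc a b)) :
    ENNReal.ofReal (G ((b - a)⁻¹ * ∫ u in a..b, g u)) ≤
      ENNReal.ofReal ((b - a)⁻¹) * ∫⁻ u in Set.Ioc a b, ENNReal.ofReal (G (g u)) := by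
  have hpos : 0 < (b - a)⁻¹ := inv_pos.2 (sub_pos.2 hab)
  by_cases htop : ∫⁻ u in Set.Ioc a b, ENNReal.ofReal (G (g u)) = ⊤
  · rw [htop, ENNReal.mul_top (by simpa using hab)]
    exact le_top
  have hmeas : AEStronglyMeasurable (fun u => G (g u)) (volume.restrict (Set.Ioc a b)) :=
    hG.comp_aestronglyMeasurable hg.1
  have hint : IntegrableOn (fun u => G (g u)) (Set.Ioc a b) := by
    refine ⟨hmeas, ?_⟩
    rw [hasFiniteIntegral_iff_ofReal (Eventually.of_forall fun x => hG0 _)]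
    exact lt_top_iff_ne_top.2 htop
  have hJ := hGc.map_set_average_le (μ := volume) (t := Set.Ioc a b) (f := g) hG.continuousOn
    isClosed_univ (by simpa using hab) (by simp) (Eventually.of_forall fun _ => Set.mem_univ _)
    hg hint
  rw [setAverage_eq, setAverage_eq, Real.volume_real_Ioc_of_le hab.le, smul_eq_mul,
    smul_eq_mul] at hJ
  rw [intervalIntegral.integral_of_le hab.le]
  refine (ENNReal.ofReal_le_ofReal hJ).trans ?_
  rw [ENNReal.ofReal_mul hpos.le, ofReal_integral_eq_lintegral_ofReal hint
    (Eventually.of_forall fun x => hG0 _)]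

/-! ### The discrete moment of order zero -/

lemma gap_mul_le {t : ℤ → ℝ} {δ : ℝ} (hgap : ∀ k : ℤ, δ ≤ t (k + 1) - t k) {j k : ℤ}
    (hjk : j ≤ k) : δ * ((k : ℝ) - j) ≤ t k - t j := by
  have hm : Monotone (fun k : ℤ => t k - δ * k) := by
    refine monotone_int_of_le_succ fun n => ?_
    have := hgap n
    push_cast
    linarith
  have := hm hjk
  simp only at this
  linarith

/-- Boundedness of `L` near `0` controls the boundedly many nodes close to `u`, and the moment of
order `β₀` controls the remaining ones. -/
lemma moment_zero_lt_top {t : ℤ → ℝ} {δ : ℝ} (hδ : 0 < δ)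
    (hgap : ∀ k : ℤ, δ ≤ t (k + 1) - t k) {L : ℝ → ℝ} (hL0 : ∀ x, 0 ≤ L x)
    (hLbd : ∃ ε > (0 : ℝ), ∃ B : ℝ, ∀ x : ℝ, |x| ≤ ε → L x ≤ B)
    (hL2 : ∃ β₀ > (0 : ℝ), dMoment t L β₀ < ⊤) :
    ⨆ u : ℝ, ∑' k : ℤ, ENNReal.ofReal (L (u - t k)) < ⊤ := by
  obtain ⟨ε, hε, B, hB⟩ := hLbd
  obtain ⟨β, hβ, hm⟩ := hL2
  set N : ℕ := ⌈2 * ε / δ⌉₊ with hN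
  have hnear : ∀ u : ℝ, ∑' k : ℤ, (if |u - t k| ≤ ε then ENNReal.ofReal B else 0) ≤
      ((2 * N + 1 : ℕ) : ENNReal) * ENNReal.ofReal B := by
    intro u
    by_cases hex : ∃ k₀, |u - t k₀| ≤ ε
    · obtain ⟨k₀, hk₀⟩ := hex
      rw [tsum_eq_sum (s := Finset.Icc (k₀ - N) (k₀ + N))]
      · refine (Finset.sum_le_card_nsmul _ _ (ENNReal.ofReal B) fun k _ => ?_).trans (le_of_eq ?_)
        · split_ifs
          · exact le_rfl
          · exact zero_le
        · rw [nsmul_eq_mul, Int.card_Icc]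
          congr 2
          omega
      · intro k hk
        rw [if_neg]
        intro hle
        apply hk
        have hle1 := abs_le.1 hle
        have hle2 := abs_le.1 hk₀
        have hNle : 2 * ε ≤ N * δ := by
          have := Nat.le_ceil (2 * ε / δ)
          rwa [div_le_iff₀ hδ] at this
        have key : ∀ j l : ℤ, j ≤ l → t l - t j ≤ 2 * ε → l - j ≤ N := by
          intro j l hjl hd
          have h1 := gap_mul_le hgap hjl
          have h2 : δ * ((l : ℝ) - j) ≤ δ * N := by linarith
          have h3 := le_of_mul_le_mul_left h2 hδ
          exact_mod_cast h3
        rw [Finset.mem_Icc]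
        rcases le_total k k₀ with h | h
        · have := key k k₀ h (by linarith)
          omega
        · have := key k₀ k h (by linarith)
          omega
    · push Not at hex
      have : ∀ k : ℤ, (if |u - t k| ≤ ε then ENNReal.ofReal B else 0) = 0 :=
        fun k => if_neg (not_le.2 (hex k))
      simp [this]
  have hbound : ∀ u : ℝ, ∑' k : ℤ, ENNReal.ofReal (L (u - t k)) ≤
      ((2 * N + 1 : ℕ) : ENNReal) * ENNReal.ofReal B +
        ENNReal.ofReal ((ε ^ β)⁻¹) * dMoment t L β := by
    intro u
    have hεβ : 0 < ε ^ β := Real.rpow_pos_of_pos hε β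
    have hterm : ∀ k : ℤ, ENNReal.ofReal (L (u - t k)) ≤
        (if |u - t k| ≤ ε then ENNReal.ofReal B else 0) +
          ENNReal.ofReal ((ε ^ β)⁻¹) * ENNReal.ofReal (L (u - t k) * |u - t k| ^ β) := by
      intro k
      split_ifs with hk
      · exact (ENNReal.ofReal_le_ofReal (hB _ hk)).trans le_self_add
      · rw [zero_add, ← ENNReal.ofReal_mul (inv_pos.2 hεβ).le]
        apply ENNReal.ofReal_le_ofReal
        have h1 : ε ^ β ≤ |u - t k| ^ β :=
          Real.rpow_le_rpow hε.le (not_le.1 hk).le hβ.le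
        rw [inv_mul_eq_div, le_div_iff₀ hεβ]
        exact mul_le_mul_of_nonneg_left h1 (hL0 _)
    refine (ENNReal.tsum_le_tsum hterm).trans ?_
    rw [ENNReal.tsum_add, ENNReal.tsum_mul_left]
    exact add_le_add (hnear u) (mul_le_mul_right
      (le_iSup (fun u : ℝ => ∑' k : ℤ, ENNReal.ofReal (L (u - t k) * |u - t k| ^ β)) u) _)
  refine (iSup_le hbound).trans_lt ?_
  exact ENNReal.add_lt_top.2 ⟨ENNReal.mul_lt_top (ENNReal.natCast_lt_top _) ENNReal.ofReal_lt_top,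
    ENNReal.mul_lt_top ENNReal.ofReal_lt_top hm⟩

/-! ### Integral estimates -/

/-- A Bochner integral of a nonnegative function is at most any finite bound of its lower
integral; no measurability is needed, since the Bochner integral of a non-integrable function
is `0`. -/
lemma integral_le_of_lintegral_le {g : ℝ → ℝ} (hg : ∀ x, 0 ≤ g x) {R : ℝ} (hR : 0 ≤ R)
    (h : ∫⁻ x, ENNReal.ofReal (g x) ≤ ENNReal.ofReal R) : ∫ x, g x ≤ R := by
  by_cases hi : Integrable g
  · rw [integral_eq_lintegral_of_nonneg_ae (Eventually.of_forall hg) hi.1]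
    exact ENNReal.toReal_le_of_le_ofReal hR h
  · rwa [integral_undef hi]

/-- Translating each summand by `t k / w` and gluing the disjoint cells `(t k / w, t (k+1) / w]`
turns the sampled double integral into a convolution-type integral. -/
lemma lintegral_sampled_le {t : ℤ → ℝ} (ht : Monotone t) {w : ℝ} (hw : 0 < w) {L : ℝ → ℝ}
    (hL : Measurable L) (c : ENNReal) {K : ℝ → ℝ → ENNReal}
    (hK : Measurable (Function.uncurry K)) :
    ∫⁻ x, ∑' k : ℤ, ENNReal.ofReal (L (w * x - t k)) *
        (c * ∫⁻ u in Set.Ioc (t k / w) (t (k + 1) / w), K (x - t k / w) u) ≤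
      ∫⁻ y, ENNReal.ofReal (L (w * y)) * (c * ∫⁻ u, K y u) := by
  obtain ⟨F, hF⟩ : ∃ F : ℤ → ℝ → ENNReal, F = fun k y => ENNReal.ofReal (L (w * y)) *
      (c * ∫⁻ u in Set.Ioc (t k / w) (t (k + 1) / w), K y u) := ⟨_, rfl⟩
  have hmeas : ∀ k : ℤ, Measurable (F k) := by
    intro k
    have h1 : Measurable fun y => ∫⁻ u in Set.Ioc (t k / w) (t (k + 1) / w), K y u :=
      hK.lintegral_prod_right'
    have h2 : Measurable fun y => L (w * y) := hL.comp (measurable_const_mul w)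
    rw [hF]
    exact h2.ennreal_ofReal.mul (h1.const_mul c)
  have hform : ∀ (k : ℤ) (x : ℝ), ENNReal.ofReal (L (w * x - t k)) *
      (c * ∫⁻ u in Set.Ioc (t k / w) (t (k + 1) / w), K (x - t k / w) u) = F k (x - t k / w) := by
    intro k x
    have : w * x - t k = w * (x - t k / w) := by field_simp
    simp only [this, hF]
  simp only [hform]
  have hmeas' : ∀ k : ℤ, Measurable fun x => F k (x - t k / w) :=
    fun k => (hmeas k).comp (measurable_sub_const (t k / w))
  rw [lintegral_tsum (fun k => (hmeas' k).aemeasurable)]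
  simp only [lintegral_sub_right_eq_self]
  rw [← lintegral_tsum (fun k => (hmeas k).aemeasurable)]
  refine lintegral_mono fun y => ?_
  simp only [hF, ENNReal.tsum_mul_left]
  gcongr
  have hdisj : Pairwise (Function.onFun Disjoint
      fun k : ℤ => Set.Ioc (t k / w) (t (k + 1) / w)) := by
    have hm : Monotone fun k : ℤ => t k / w := fun i j hij =>
      div_le_div_of_nonneg_right (ht hij) hw.le
    simpa only [Order.succ_eq_add_one] using hm.pairwise_disjoint_on_Ioc_succ
  rw [← lintegral_iUnion (fun k => measurableSet_Ioc) hdisj]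
  exact setLIntegral_le_lintegral _ _

/-- The integral is split at `|y| = d`: near the origin `H` is bounded by the modulus of
continuity `P`, and far from it by a modular `Q`. -/
lemma lintegral_split_le {l H : ℝ → ENNReal} (hl : Measurable l) (c P Q : ENNReal) {d : ℝ}
    (hP : ∀ y, |y| ≤ d → H y ≤ P) (hQ : ∀ y, H y ≤ Q) :
    ∫⁻ y, l y * (c * H y) ≤
      c * P * (∫⁻ y, l y) + c * Q * ∫⁻ y in {y : ℝ | d < |y|}, l y := by
  have hA : MeasurableSet {y : ℝ | d < |y|} := measurableSet_lt measurable_const continuous_abs.measurable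
  rw [← lintegral_add_compl (fun y => l y * (c * H y)) hA, add_comm]
  refine add_le_add ?_ ?_
  · calc ∫⁻ y in {y : ℝ | d < |y|}ᶜ, l y * (c * H y)
        ≤ ∫⁻ y in {y : ℝ | d < |y|}ᶜ, c * P * l y := by
          refine setLIntegral_mono (hl.const_mul _) fun y hy => ?_
          rw [mul_comm]
          gcongr
          exact hP y (not_lt.1 hy)
      _ ≤ ∫⁻ y, c * P * l y := setLIntegral_le_lintegral _ _
      _ = c * P * ∫⁻ y, l y := lintegral_const_mul _ hl
  · rw [← lintegral_const_mul _ hl]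
    refine lintegral_mono fun y => ?_
    simp only
    rw [mul_comm]
    gcongr
    exact hQ y

lemma lintegral_average_le {K : ℝ → ℝ → ENNReal} (hK : Measurable (Function.uncurry K))
    {d : ℝ} {P : ENNReal} (hP : ∀ y, |y| ≤ d → ∫⁻ u, K y u ≤ P) :
    ∫⁻ x, ∫⁻ v in Set.Ioc 0 d, K v x ≤ P * ENNReal.ofReal d := by
  rw [lintegral_lintegral_swap (f := fun x v => K v x) (hK.comp measurable_swap).aemeasurable]
  calc ∫⁻ v in Set.Ioc 0 d, ∫⁻ x, K v x ≤ ∫⁻ v in Set.Ioc 0 d, P := by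
        refine setLIntegral_mono measurable_const fun v hv => hP v ?_
        rw [abs_of_pos hv.1]
        exact hv.2
    _ = P * ENNReal.ofReal d := by simp

/-! ### The modulus of continuity -/

lemma phi_diff_le {η : ℝ → ℝ} {lam : ℝ} (hη : IsPhiFun η)
    (hηc : ConvexOn ℝ (Set.Ici 0) η) (hlam : 0 ≤ lam) (a b : ℝ) :
    η (lam * |a - b|) ≤ (η (2 * lam * |a|) + η (2 * lam * |b|)) / 2 := by
  have h := (hη.convexOn_abs hηc hlam).2 (Set.mem_univ (2 * a)) (Set.mem_univ (-(2 * b)))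
    (show (0 : ℝ) ≤ 1 / 2 by norm_num) (show (0 : ℝ) ≤ 1 / 2 by norm_num) (by norm_num)
  simp only [smul_eq_mul, abs_neg, abs_mul, abs_two] at h
  have e : (1 / 2 : ℝ) * (2 * a) + 1 / 2 * (-(2 * b)) = a - b := by ring
  rw [e, show lam * (2 * |a|) = 2 * lam * |a| by ring,
    show lam * (2 * |b|) = 2 * lam * |b| by ring] at h
  linarith

lemma integrable_diff {η f : ℝ → ℝ} {lam : ℝ} (hη : IsPhiFun η)
    (hηc : ConvexOn ℝ (Set.Ici 0) η) (hlam : 0 < lam) (hf : Measurable f)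
    (hint : Integrable fun x => η (2 * lam * |f x|)) (s : ℝ) :
    Integrable fun x => η (lam * |f (x + s) - f x|) := by
  have hsh : Integrable fun x => η (2 * lam * |f (x + s)|) := hint.comp_add_right s
  refine ((hsh.add hint).div_const 2).mono' ?_ (Eventually.of_forall fun x => ?_)
  · exact ((hη.continuous_abs hlam.le).measurable.comp
      ((hf.comp (measurable_add_const s)).sub hf)).aestronglyMeasurable
  · rw [Real.norm_of_nonneg (hη.nonneg (by positivity))]
    exact phi_diff_le hη hηc hlam.le _ _

lemma integral_diff_le {η f : ℝ → ℝ} {lam : ℝ} (hη : IsPhiFun η)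
    (hηc : ConvexOn ℝ (Set.Ici 0) η) (hlam : 0 < lam) (hf : Measurable f)
    (hint : Integrable fun x => η (2 * lam * |f x|)) (s : ℝ) :
    ∫ x, η (lam * |f (x + s) - f x|) ≤ ∫ x, η (2 * lam * |f x|) := by
  have hsh : Integrable fun x => η (2 * lam * |f (x + s)|) := hint.comp_add_right s
  calc ∫ x, η (lam * |f (x + s) - f x|)
      ≤ ∫ x, (η (2 * lam * |f (x + s)|) + η (2 * lam * |f x|)) / 2 :=
        integral_mono (integrable_diff hη hηc hlam hf hint s) ((hsh.add hint).div_const 2)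
          fun x => phi_diff_le hη hηc hlam.le _ _
    _ = ∫ x, η (2 * lam * |f x|) := by
        rw [integral_div, integral_add hsh hint,
          integral_add_right_eq_self (fun x => η (2 * lam * |f x|)) s]
        ring

lemma lintegral_diff_le {η f : ℝ → ℝ} {lam : ℝ} (hη : IsPhiFun η)
    (hηc : ConvexOn ℝ (Set.Ici 0) η) (hlam : 0 < lam) (hf : Measurable f)
    (hint : Integrable fun x => η (2 * lam * |f x|)) (s : ℝ) :
    ∫⁻ x, ENNReal.ofReal (η (lam * |f (x + s) - f x|)) ≤
      ENNReal.ofReal (∫ x, η (2 * lam * |f x|)) := by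
  rw [← ofReal_integral_eq_lintegral_ofReal (integrable_diff hη hηc hlam hf hint s)
    (Eventually.of_forall fun x => hη.nonneg (by positivity))]
  exact ENNReal.ofReal_le_ofReal (integral_diff_le hη hηc hlam hf hint s)

lemma lintegral_diff_le_omegaMod {η f : ℝ → ℝ} {lam : ℝ} (hη : IsPhiFun η)
    (hηc : ConvexOn ℝ (Set.Ici 0) η) (hlam : 0 < lam) (hf : Measurable f)
    (hint : Integrable fun x => η (2 * lam * |f x|)) {d s : ℝ} (hs : |s| ≤ d) :
    ∫⁻ x, ENNReal.ofReal (η (lam * |f (x + s) - f x|)) ≤ ENNReal.ofReal (omegaMod η lam f d) := by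
  rw [← ofReal_integral_eq_lintegral_ofReal (integrable_diff hη hηc hlam hf hint s)
    (Eventually.of_forall fun x => hη.nonneg (by positivity))]
  refine ENNReal.ofReal_le_ofReal ?_
  exact le_ciSup (f := fun s : {s : ℝ // |s| ≤ d} => ∫ x : ℝ, η (lam * |f (x + (s : ℝ)) - f x|))
    ⟨_, by rintro _ ⟨s, rfl⟩; exact integral_diff_le hη hηc hlam hf hint s⟩ ⟨s, hs⟩

/-! ### Pointwise estimates -/

/-- A partial sum of the error is bounded by three terms of weight `1/3` each; the first two are
estimated by the weighted Jensen inequality. -/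
lemma phi_split_finset {φ : ℝ → ℝ} (hφ : IsPhiFun φ) (hφc : ConvexOn ℝ (Set.Ici 0) φ)
    {d a b c : ℤ → ℝ} (ha : ∀ k, 0 ≤ a k) (hb : ∀ k, 0 ≤ b k) (hc : ∀ k, 0 ≤ c k)
    (hd : ∀ k, |d k| ≤ a k * (b k + c k)) {m C μ r : ℝ} (hm : 0 < m) (hμ : 0 ≤ μ)
    (hμC : 3 * μ * m ≤ C) (F : Finset ℤ) (hF : ∑ k ∈ F, a k ≤ m) :
    φ (|μ * (∑ k ∈ F, d k + r)|) ≤ (3 * m)⁻¹ * ∑ k ∈ F, a k * φ (C * b k) +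
      (3 * m)⁻¹ * ∑ k ∈ F, a k * φ (C * c k) + φ (3 * μ * |r|) / 3 := by
  have hC : 0 ≤ C := le_trans (by positivity) hμC
  have hX : ∀ e : ℤ → ℝ, (∀ k, 0 ≤ e k) →
      3 * μ * ∑ k ∈ F, a k * e k ≤ m⁻¹ * ∑ k ∈ F, a k * (C * e k) := by
    intro e he
    have h0 : 0 ≤ ∑ k ∈ F, a k * e k := Finset.sum_nonneg fun k _ => mul_nonneg (ha k) (he k)
    have e1 : ∑ k ∈ F, a k * (C * e k) = C * ∑ k ∈ F, a k * e k := by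
      rw [Finset.mul_sum]
      exact Finset.sum_congr rfl fun k _ => by ring
    rw [e1, ← mul_assoc]
    refine mul_le_mul_of_nonneg_right ?_ h0
    rwa [inv_mul_eq_div, le_div_iff₀ hm]
  have hsum : |∑ k ∈ F, d k + r| ≤ ∑ k ∈ F, a k * b k + ∑ k ∈ F, a k * c k + |r| := by
    refine (abs_add_le _ _).trans (add_le_add_left ?_ _)
    refine (Finset.abs_sum_le_sum_abs _ _).trans ?_
    rw [← Finset.sum_add_distrib]
    exact Finset.sum_le_sum fun k _ => (hd k).trans_eq (mul_add _ _ _)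
  have hnn : ∀ e : ℤ → ℝ, (∀ k, 0 ≤ e k) → 0 ≤ m⁻¹ * ∑ k ∈ F, a k * (C * e k) := fun e he =>
    mul_nonneg (inv_pos.2 hm).le
      (Finset.sum_nonneg fun k _ => mul_nonneg (ha k) (mul_nonneg hC (he k)))
  have harg : |μ * (∑ k ∈ F, d k + r)| ≤ (m⁻¹ * ∑ k ∈ F, a k * (C * b k) +
      m⁻¹ * ∑ k ∈ F, a k * (C * c k) + 3 * μ * |r|) / 3 := by
    rw [abs_mul, abs_of_nonneg hμ]
    have h1 := mul_le_mul_of_nonneg_left hsum hμ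
    have h2 := hX b hb
    have h3 := hX c hc
    linarith
  have h3 := IsPhiFun.map_add_three_le hφc (hnn b hb) (hnn c hc)
    (show 0 ≤ 3 * μ * |r| by positivity)
  have hJb := hφ.jensen_finset hφc F a (fun k => C * b k) ha (fun k => mul_nonneg hC (hb k)) hm hF
  have hJc := hφ.jensen_finset hφc F a (fun k => C * c k) ha (fun k => mul_nonneg hC (hc k)) hm hF
  refine (hφ.mono (abs_nonneg _) harg).trans (h3.trans ?_)
  rw [mul_inv]
  linarith

/-- The passage to the limit over finite partial sums; the series on the right are taken in
`[0, ∞]`, so they need not converge. -/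
lemma phi_split_tsum {φ : ℝ → ℝ} (hφ : IsPhiFun φ) (hφc : ConvexOn ℝ (Set.Ici 0) φ)
    {d a b c : ℤ → ℝ} (ha : ∀ k, 0 ≤ a k) (hb : ∀ k, 0 ≤ b k) (hc : ∀ k, 0 ≤ c k)
    (hd : ∀ k, |d k| ≤ a k * (b k + c k)) {m C μ r D : ℝ} (hm : 0 < m) (hμ : 0 ≤ μ)
    (hμC : 3 * μ * m ≤ C) (hF : ∀ F : Finset ℤ, ∑ k ∈ F, a k ≤ m) (hD : HasSum d D) :
    ENNReal.ofReal (φ (|μ * (D + r)|)) ≤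
      ENNReal.ofReal (3 * m)⁻¹ * ∑' k, ENNReal.ofReal (a k) * ENNReal.ofReal (φ (C * b k)) +
      ENNReal.ofReal (3 * m)⁻¹ * ∑' k, ENNReal.ofReal (a k) * ENNReal.ofReal (φ (C * c k)) +
      ENNReal.ofReal (φ (3 * μ * |r|) / 3) := by
  have hC : 0 ≤ C := le_trans (by positivity) hμC
  have hcont : Continuous fun x : ℝ => ENNReal.ofReal (φ (|μ * (x + r)|)) := by
    have h1 := hφ.continuous_abs zero_le_one
    simp only [one_mul] at h1
    exact ENNReal.continuous_ofReal.comp (h1.comp (by fun_prop : Continuous fun x => μ * (x + r)))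
  have hlim : Tendsto (fun F : Finset ℤ => ENNReal.ofReal (φ (|μ * (∑ k ∈ F, d k + r)|))) atTop
      (nhds (ENNReal.ofReal (φ (|μ * (D + r)|)))) := (hcont.tendsto D).comp hD
  refine le_of_tendsto hlim (Eventually.of_forall fun F => ?_)
  have hnn : ∀ e : ℤ → ℝ, (∀ k, 0 ≤ e k) → ∀ k, 0 ≤ a k * φ (C * e k) := fun e he k =>
    mul_nonneg (ha k) (hφ.nonneg (mul_nonneg hC (he k)))
  have hs : ∀ e : ℤ → ℝ, (∀ k, 0 ≤ e k) →
      ENNReal.ofReal ((3 * m)⁻¹ * ∑ k ∈ F, a k * φ (C * e k)) ≤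
      ENNReal.ofReal (3 * m)⁻¹ *
        ∑' k, ENNReal.ofReal (a k) * ENNReal.ofReal (φ (C * e k)) := by
    intro e he
    rw [ENNReal.ofReal_mul (by positivity), ENNReal.ofReal_sum_of_nonneg fun k _ => hnn e he k]
    gcongr
    simp only [fun k => ENNReal.ofReal_mul (p := a k) (q := φ (C * e k)) (ha k)]
    exact ENNReal.sum_le_tsum F
  refine (ENNReal.ofReal_le_ofReal
    (phi_split_finset hφ hφc ha hb hc hd hm hμ hμC F (hF F))).trans ?_
  refine ENNReal.ofReal_add_le.trans (add_le_add_left (ENNReal.ofReal_add_le.trans ?_) _)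
  exact add_le_add (hs b hb) (hs c hc)

lemma intervalIntegrable_shift {f : ℝ → ℝ} (hf : LocallyIntegrable f) (c a b : ℝ) :
    IntervalIntegrable (fun u => f (u + c)) volume a b := by
  have h : IntervalIntegrable f volume (a + c) (b + c) :=
    intervalIntegrable_iff.2 ((hf.integrableOn_isCompact isCompact_uIcc).mono_set
      Set.uIoc_subset_uIcc)
  simpa using h.comp_add_right c

/-- The mean over the cell `[p/w, q/w]` is compared with the mean over the translated cell that
starts at `x`. -/
lemma phi_cell_diff_le {η f : ℝ → ℝ} {lam : ℝ} (hη : IsPhiFun η)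
    (hηc : ConvexOn ℝ (Set.Ici 0) η) (hlam : 0 < lam) (hf : LocallyIntegrable f)
    {δ w p q : ℝ} (hδ : 0 < δ) (hpq : δ ≤ q - p) (hw : 0 < w) (x : ℝ) :
    ENNReal.ofReal (η (lam * |w / (q - p) * (∫ u in (p / w)..(q / w), f u) -
        w / (q - p) * ∫ v in (0 : ℝ)..((q - p) / w), f (v + x)|)) ≤
      ENNReal.ofReal (w / δ) * ∫⁻ u in Set.Ioc (p / w) (q / w),
        ENNReal.ofReal (η (lam * |f (u + (x - p / w)) - f u|)) := by
  have hqp : 0 < q - p := hδ.trans_le hpq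
  have hlt : p / w < q / w := div_lt_div_of_pos_right (sub_pos.1 hqp) hw
  have hi0 : IntervalIntegrable f volume (p / w) (q / w) := by
    simpa using intervalIntegrable_shift hf 0 (p / w) (q / w)
  have hi1 := intervalIntegrable_shift hf (x - p / w) (p / w) (q / w)
  have hJ := jensen_interval (hη.continuous_abs hlam.le) (hη.convexOn_abs hηc hlam.le)
    (fun y => hη.nonneg (by positivity)) hlt
    (g := fun u => f (u + (x - p / w)) - f u)
    ((intervalIntegrable_iff_integrableOn_Ioc_of_le hlt.le).1 (hi1.sub hi0))
  have einv : (q / w - p / w)⁻¹ = w / (q - p) := by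
    rw [← sub_div, inv_div]
  have eshift : ∫ v in (0 : ℝ)..((q - p) / w), f (v + x) =
      ∫ u in (p / w)..(q / w), f (u + (x - p / w)) := by
    rw [intervalIntegral.integral_comp_add_right, intervalIntegral.integral_comp_add_right]
    congr 1 <;> ring
  rw [intervalIntegral.integral_sub hi1 hi0, einv] at hJ
  rw [eshift, abs_sub_comm, ← mul_sub]
  refine hJ.trans ?_
  gcongr

lemma phi_cell_avg_le {η f : ℝ → ℝ} {lam : ℝ} (hη : IsPhiFun η)
    (hηc : ConvexOn ℝ (Set.Ici 0) η) (hlam : 0 < lam) (hf : LocallyIntegrable f)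
    {δ Δ w s : ℝ} (hδ : 0 < δ) (hs : δ ≤ s) (hsΔ : s ≤ Δ) (hw : 0 < w) (x : ℝ) :
    ENNReal.ofReal (η (lam * |w / s * (∫ v in (0 : ℝ)..(s / w), f (v + x)) - f x|)) ≤
      ENNReal.ofReal (w / δ) * ∫⁻ v in Set.Ioc 0 (Δ / w),
        ENNReal.ofReal (η (lam * |f (x + v) - f x|)) := by
  have hs0 : 0 < s := hδ.trans_le hs
  have hlt : 0 < s / w := div_pos hs0 hw
  have hi1 := intervalIntegrable_shift hf x 0 (s / w)
  have hic : IntervalIntegrable (fun _ : ℝ => f x) volume 0 (s / w) := intervalIntegrable_const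
  have hJ := jensen_interval (hη.continuous_abs hlam.le) (hη.convexOn_abs hηc hlam.le)
    (fun y => hη.nonneg (by positivity)) hlt (g := fun v => f (v + x) - f x)
    ((intervalIntegrable_iff_integrableOn_Ioc_of_le hlt.le).1 (hi1.sub hic))
  have einv : (s / w - 0)⁻¹ = w / s := by rw [sub_zero, inv_div]
  have econst : w / s * ((∫ v in (0 : ℝ)..(s / w), f (v + x)) - (s / w - 0) • f x) =
      w / s * (∫ v in (0 : ℝ)..(s / w), f (v + x)) - f x := by
    rw [sub_zero, smul_eq_mul]
    field_simp
  rw [intervalIntegral.integral_sub hi1 hic, intervalIntegral.integral_const, einv, econst] at hJ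
  refine hJ.trans ?_
  simp only [fun v => add_comm v x]
  gcongr

/-- If `L` vanished identically, (χ2) and (χ3) would force `χ = 0`, contradicting (χ4). Hence
`m_{0,Π}(L)` is positive. -/
lemma exists_pos_of_kernel {t : ℤ → ℝ} {χ : ℝ → ℝ → ℝ} {L ψ : ℝ → ℝ} (hχ2 : ∀ x, χ x 0 = 0)
    (hL0 : ∀ x, 0 ≤ L x) (hχ3 : ∀ x u v : ℝ, |χ x u - χ x v| ≤ L x * ψ (|u - v|))
    {θ₀ : ℝ} (hθ₀ : 0 < θ₀) {M₂ W : ℝ}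
    (hχ4 : ∀ w ≥ W, ∀ x u : ℝ, u ≠ 0 →
      |(∑' k : ℤ, χ (w * x - t k) u) / u - 1| ≤ M₂ * w ^ (-θ₀)) : ∃ x, 0 < L x := by
  by_contra hcon
  push Not at hcon
  have hL : ∀ x, L x = 0 := fun x => le_antisymm (hcon x) (hL0 x)
  have hχ : ∀ x u, χ x u = 0 := by
    intro x u
    have := hχ3 x u 0
    rw [hL, zero_mul, hχ2, sub_zero] at this
    exact abs_nonpos_iff.1 this
  have hlim : Tendsto (fun w : ℝ => M₂ * w ^ (-θ₀)) atTop (nhds 0) := by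
    simpa using (tendsto_rpow_neg_atTop hθ₀).const_mul M₂
  have hge : ∀ᶠ w : ℝ in atTop, (1 : ℝ) ≤ M₂ * w ^ (-θ₀) := by
    filter_upwards [eventually_ge_atTop W] with w hw
    simpa [hχ] using hχ4 w hw 0 1 one_ne_zero
  exact absurd (ge_of_tendsto hlim hge) (by norm_num)

/-- Theorem 1: quantitative estimate for nonlinear sampling Kantorovich operators
in Orlicz spaces. -/
theorem quantitative_estimate_orlicz
    (t : ℤ → ℝ) (δ Δ : ℝ) (hδ : 0 < δ) (hδΔ : δ ≤ Δ)
    (hgap : ∀ k : ℤ, δ ≤ t (k + 1) - t k ∧ t (k + 1) - t k ≤ Δ)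
    (htop : Tendsto t atTop atTop) (hbot : Tendsto t atBot atBot)
    (χ : ℝ → ℝ → ℝ) (L ψ φ η : ℝ → ℝ)
    (hφ : IsPhiFun φ) (hφconv : ConvexOn ℝ (Set.Ici 0) φ)
    (hη : IsPhiFun η) (hηconv : ConvexOn ℝ (Set.Ici 0) η)
    (hψ : IsPhiFun ψ)
    -- condition (H)
    (hH : ∀ lam : ℝ, lam ∈ Set.Ioo (0 : ℝ) 1 → ∃ C ∈ Set.Ioo (0 : ℝ) 1,
      ∀ u : ℝ, 0 ≤ u → φ (C * ψ u) ≤ η (lam * u))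
    -- (χ1)
    (hχ1 : ∀ x u w : ℝ, 0 < w → Summable (fun k : ℤ => χ (w * x - t k) u))
    -- (χ2)
    (hχ2 : ∀ x : ℝ, χ x 0 = 0)
    -- (χ3)
    (hLmeas : Measurable L) (hLnonneg : ∀ x : ℝ, 0 ≤ L x)
    (hχ3 : ∀ x u v : ℝ, |χ x u - χ x v| ≤ L x * ψ (|u - v|))
    -- (χ4)
    (θ₀ : ℝ) (hθ₀ : 0 < θ₀)
    (hχ4 : ∃ M₂ > (0 : ℝ), ∃ W : ℝ, ∀ w ≥ W, ∀ x u : ℝ, u ≠ 0 →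
      |(∑' k : ℤ, χ (w * x - t k) u) / u - 1| ≤ M₂ * w ^ (-θ₀))
    -- (L1)
    (hL1 : Integrable L)
    (hLbd : ∃ ε > (0 : ℝ), ∃ B : ℝ, ∀ x : ℝ, |x| ≤ ε → L x ≤ B)
    -- (L2)
    (hL2 : ∃ β₀ > (0 : ℝ), dMoment t L β₀ < ⊤)
    -- condition (3.1)
    (α M₁ α₀ : ℝ) (hα : 0 < α) (hα1 : α < 1) (hM₁ : 0 < M₁) (hα₀ : 0 < α₀)
    (h31 : ∃ W : ℝ, ∀ w ≥ W,
      w * ∫ y in {y : ℝ | 1 / w ^ α < |y|}, L (w * y) ≤ M₁ * w ^ (-α₀))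
    -- f ∈ L^{φ+η}(ℝ)
    (f : ℝ → ℝ) (hfmeas : Measurable f) (hfloc : LocallyIntegrable f)
    (hf : ∃ lam > (0 : ℝ),
      Integrable (fun x : ℝ => φ (lam * |f x|) + η (lam * |f x|)))
    -- the series defining `S_w f` converges everywhere
    (hconv : ∀ w > (0 : ℝ), ∀ x : ℝ, Summable (fun k : ℤ => χ (w * x - t k)
      ((w / (t (k + 1) - t k)) * ∫ u in (t k / w)..(t (k + 1) / w), f u))) :
    ∃ μ > (0 : ℝ), ∃ lam₀ > (0 : ℝ), ∃ lam > (0 : ℝ), ∃ W : ℝ, ∀ w ≥ W,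
      Iph φ (fun x => μ * (SwOp t χ f w x - f x)) ≤
        ((∫ u : ℝ, L u) / (3 * δ * m0R t L)) * omegaMod η lam f (1 / w ^ α)
        + (M₁ * Iph η (fun x => lam₀ * f x) / (3 * δ * m0R t L)) * w ^ (-α₀)
        + (Δ / (3 * δ)) * omegaMod η lam f (Δ / w)
        + (Iph φ (fun x => lam₀ * f x) / 3) * w ^ (-θ₀) := by
  obtain ⟨M₂, hM₂, W₂, hW₂⟩ := hχ4
  obtain ⟨W₁, hW₁⟩ := h31
  obtain ⟨lamf, hlamf, hfint⟩ := hf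
  have hgap1 : ∀ k : ℤ, δ ≤ t (k + 1) - t k := fun k => (hgap k).1
  have htmono : Monotone t := monotone_int_of_le_succ fun k => by linarith [hgap1 k]
  -- `0 < m_{0,Π}(L) < ∞`
  have hm0top := moment_zero_lt_top hδ hgap1 hLnonneg hLbd hL2
  obtain ⟨x₀, hx₀⟩ := exists_pos_of_kernel hχ2 hLnonneg hχ3 hθ₀ hW₂
  set m : ℝ := m0R t L with hmdef
  have hmle : ∀ u : ℝ, ∑' k : ℤ, ENNReal.ofReal (L (u - t k)) ≤ ENNReal.ofReal m := by
    intro u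
    rw [hmdef, m0R, ENNReal.ofReal_toReal hm0top.ne]
    exact le_iSup (fun u : ℝ => ∑' k : ℤ, ENNReal.ofReal (L (u - t k))) u
  have hm : 0 < m := by
    have h1 := (ENNReal.le_tsum (f := fun k : ℤ => ENNReal.ofReal (L (x₀ + t 0 - t k))) 0).trans
      (hmle (x₀ + t 0))
    rw [add_sub_cancel_right] at h1
    exact ENNReal.ofReal_pos.1 ((ENNReal.ofReal_pos.2 hx₀).trans_le h1)
  -- `2 * lam ≤ lamf` keeps all modulars finite, `lam < 1` makes (H) applicable, and `μ` is small
  -- enough for the weighted Jensen inequality (constant `C`) and for the (χ4) term (constant `M₂`).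
  set lam : ℝ := min (1 / 2) (lamf / 2) with hlamdef
  have hlam : 0 < lam := lt_min (by norm_num) (by positivity)
  have hlam1 : lam < 1 := (min_le_left _ _).trans_lt (by norm_num)
  have hlam2 : 2 * lam ≤ lamf := by linarith [min_le_right (1 / 2 : ℝ) (lamf / 2)]
  obtain ⟨C, ⟨hC0, -⟩, hC⟩ := hH lam ⟨hlam, hlam1⟩
  set μ : ℝ := min (C / (3 * m)) (2 * lam / (3 * M₂)) with hμdef
  have hμ : 0 < μ := lt_min (by positivity) (by positivity)
  have hμC : 3 * μ * m ≤ C := by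
    have h1 : μ ≤ C / (3 * m) := min_le_left _ _
    rw [le_div_iff₀ (by positivity)] at h1
    linarith
  have hμM : 3 * μ * M₂ ≤ 2 * lam := by
    have h1 : μ ≤ 2 * lam / (3 * M₂) := min_le_right _ _
    rw [le_div_iff₀ (by positivity)] at h1
    linarith
  -- both summands of the modular of `φ + η` are integrable at the level `2 * lam`
  have hdom : ∀ g : ℝ → ℝ, IsPhiFun g →
      (∀ x, g (lamf * |f x|) ≤ φ (lamf * |f x|) + η (lamf * |f x|)) →
      Integrable fun x => g (2 * lam * |f x|) := by
    intro g hg hle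
    refine hfint.mono' ((hg.continuous_abs (by positivity)).measurable.comp
      hfmeas).aestronglyMeasurable (Eventually.of_forall fun x => ?_)
    rw [Real.norm_of_nonneg (hg.nonneg (by positivity))]
    exact (hg.mono (by positivity)
      (mul_le_mul_of_nonneg_right hlam2 (abs_nonneg _))).trans (hle x)
  have hφint := hdom φ hφ fun x => le_add_of_nonneg_right (hη.nonneg (by positivity))
  have hηint := hdom η hη fun x => le_add_of_nonneg_left (hφ.nonneg (by positivity))
  have hIph : ∀ g : ℝ → ℝ, Iph g (fun x => 2 * lam * f x) = ∫ x, g (2 * lam * |f x|) := by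
    intro g
    simp only [Iph, abs_mul, abs_of_pos (show 0 < 2 * lam by positivity)]
  refine ⟨μ, hμ, 2 * lam, by positivity, lam, hlam, max 1 (max W₁ W₂), fun w hw => ?_⟩
  have hw1 : 1 ≤ w := (le_max_left _ _).trans hw
  have hwW₁ : W₁ ≤ w := (le_max_left _ _).trans ((le_max_right _ _).trans hw)
  have hwW₂ : W₂ ≤ w := (le_max_right _ _).trans ((le_max_right _ _).trans hw)
  have hw0 : 0 < w := zero_lt_one.trans_le hw1
  have hwθ : 0 < w ^ (-θ₀) := Real.rpow_pos_of_pos hw0 _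
  have hwθ1 : w ^ (-θ₀) ≤ 1 := Real.rpow_le_one_of_one_le_of_nonpos hw1 (by linarith)
  have hwα₀ : 0 < w ^ (-α₀) := Real.rpow_pos_of_pos hw0 _
  have hΔ : 0 < Δ := hδ.trans_le hδΔ
  rw [hIph φ, hIph η]
  set Iη : ℝ := ∫ x, η (2 * lam * |f x|) with hIη
  set Iφ : ℝ := ∫ x, φ (2 * lam * |f x|) with hIφ
  have hIη0 : 0 ≤ Iη := integral_nonneg fun x => hη.nonneg (by positivity)
  have hIφ0 : 0 ≤ Iφ := integral_nonneg fun x => hφ.nonneg (by positivity)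
  have hL0 : 0 ≤ ∫ u, L u := integral_nonneg hLnonneg
  have hω0 : ∀ d, 0 ≤ omegaMod η lam f d := fun d =>
    Real.iSup_nonneg fun s => integral_nonneg fun x => hη.nonneg (by positivity)
  set K : ℝ → ℝ → ENNReal := fun y u => ENNReal.ofReal (η (lam * |f (u + y) - f u|)) with hKdef
  have hK : Measurable (Function.uncurry K) := by
    have h1 : Measurable fun z : ℝ × ℝ => f (z.2 + z.1) - f z.2 :=
      (hfmeas.comp (measurable_snd.add measurable_fst)).sub (hfmeas.comp measurable_snd)
    exact ((hη.continuous_abs hlam.le).measurable.comp h1).ennreal_ofReal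
  have hKω : ∀ d y, |y| ≤ d → ∫⁻ u, K y u ≤ ENNReal.ofReal (omegaMod η lam f d) :=
    fun d y hy => lintegral_diff_le_omegaMod hη hηconv hlam hfmeas hηint hy
  have hKI : ∀ y, ∫⁻ u, K y u ≤ ENNReal.ofReal Iη :=
    fun y => lintegral_diff_le hη hηconv hlam hfmeas hηint y
  -- Insert the means `B k` of `f` over the cells translated to start at `x` between the sampled
  -- means `A k` and the value `f x`.
  have hpt : ∀ x, ENNReal.ofReal (φ (|μ * (SwOp t χ f w x - f x)|)) ≤
      ENNReal.ofReal (3 * m)⁻¹ * (∑' k : ℤ, ENNReal.ofReal (L (w * x - t k)) *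
        (ENNReal.ofReal (w / δ) *
          ∫⁻ u in Set.Ioc (t k / w) (t (k + 1) / w), K (x - t k / w) u)) +
      ENNReal.ofReal (3 * m)⁻¹ * (ENNReal.ofReal m *
        (ENNReal.ofReal (w / δ) * ∫⁻ v in Set.Ioc 0 (Δ / w), K v x)) +
      ENNReal.ofReal (w ^ (-θ₀) / 3 * φ (2 * lam * |f x|)) := by
    intro x
    set A : ℤ → ℝ := fun k =>
      (w / (t (k + 1) - t k)) * ∫ u in (t k / w)..(t (k + 1) / w), f u with hA
    set B : ℤ → ℝ := fun k =>
      (w / (t (k + 1) - t k)) * ∫ v in (0 : ℝ)..((t (k + 1) - t k) / w), f (v + x) with hB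
    set r : ℝ := (∑' k : ℤ, χ (w * x - t k) (f x)) - f x with hr
    have hsum : HasSum (fun k : ℤ => χ (w * x - t k) (A k) - χ (w * x - t k) (f x))
        (SwOp t χ f w x - ∑' k : ℤ, χ (w * x - t k) (f x)) :=
      (hconv w hw0 x).hasSum.sub (hχ1 x (f x) w hw0).hasSum
    have hd : ∀ k : ℤ, |χ (w * x - t k) (A k) - χ (w * x - t k) (f x)| ≤
        L (w * x - t k) * (ψ (|A k - B k|) + ψ (|B k - f x|)) := by
      intro k
      refine (abs_sub_le _ (χ (w * x - t k) (B k)) _).trans ?_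
      rw [mul_add]
      exact add_le_add (hχ3 _ _ _) (hχ3 _ _ _)
    have hF : ∀ F : Finset ℤ, ∑ k ∈ F, L (w * x - t k) ≤ m := by
      intro F
      have h1 := (ENNReal.sum_le_tsum (f := fun k : ℤ => ENNReal.ofReal (L (w * x - t k))) F).trans
        (hmle (w * x))
      rw [← ENNReal.ofReal_sum_of_nonneg fun k _ => hLnonneg _] at h1
      exact (ENNReal.ofReal_le_ofReal_iff hm.le).1 h1
    have hsplit := phi_split_tsum hφ hφconv (a := fun k : ℤ => L (w * x - t k))
      (b := fun k => ψ (|A k - B k|)) (c := fun k => ψ (|B k - f x|)) (r := r)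
      (fun k => hLnonneg _) (fun k => hψ.nonneg (abs_nonneg _))
      (fun k => hψ.nonneg (abs_nonneg _)) hd hm hμ.le hμC hF hsum
    have eD : SwOp t χ f w x - (∑' k : ℤ, χ (w * x - t k) (f x)) + r = SwOp t χ f w x - f x := by
      rw [hr]; ring
    rw [eD] at hsplit
    refine hsplit.trans (add_le_add (add_le_add ?_ ?_) (ENNReal.ofReal_le_ofReal ?_))
    · gcongr with k
      exact (ENNReal.ofReal_le_ofReal (hC _ (abs_nonneg _))).trans
        (phi_cell_diff_le hη hηconv hlam hfloc hδ (hgap1 k) hw0 x)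
    · gcongr
      calc ∑' k : ℤ, ENNReal.ofReal (L (w * x - t k)) *
            ENNReal.ofReal (φ (C * ψ (|B k - f x|)))
          ≤ ∑' k : ℤ, ENNReal.ofReal (L (w * x - t k)) *
            (ENNReal.ofReal (w / δ) * ∫⁻ v in Set.Ioc 0 (Δ / w), K v x) := by
            gcongr with k
            exact (ENNReal.ofReal_le_ofReal (hC _ (abs_nonneg _))).trans
              (phi_cell_avg_le hη hηconv hlam hfloc hδ (hgap1 k) (hgap k).2 hw0 x)
        _ ≤ _ := by
            rw [ENNReal.tsum_mul_right]
            gcongr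
            exact hmle (w * x)
    · have hrle : |r| ≤ M₂ * w ^ (-θ₀) * |f x| := by
        by_cases hfx : f x = 0
        · simp [hr, hfx, hχ2]
        · have h1 := hW₂ w hwW₂ x (f x) hfx
          have e1 : r = ((∑' k : ℤ, χ (w * x - t k) (f x)) / f x - 1) * f x := by
            rw [hr]; field_simp
          rw [e1, abs_mul]
          exact mul_le_mul_of_nonneg_right h1 (abs_nonneg _)
      have h2 : φ (3 * μ * |r|) ≤ w ^ (-θ₀) * φ (2 * lam * |f x|) := by
        refine (hφ.mono (by positivity) ?_).trans
          (hφ.map_mul_le hφconv hwθ.le hwθ1 (by positivity))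
        calc 3 * μ * |r| ≤ 3 * μ * (M₂ * w ^ (-θ₀) * |f x|) := by gcongr
          _ = w ^ (-θ₀) * (3 * μ * M₂ * |f x|) := by ring
          _ ≤ w ^ (-θ₀) * (2 * lam * |f x|) := by gcongr
      linarith
  have hLw : Integrable fun y => L (w * y) := hL1.comp_mul_left' hw0.ne'
  have hLwall : ∫⁻ y, ENNReal.ofReal (L (w * y)) = ENNReal.ofReal (w⁻¹ * ∫ u, L u) := by
    rw [← ofReal_integral_eq_lintegral_ofReal hLw (Eventually.of_forall fun y => hLnonneg _),
      Measure.integral_comp_mul_left, abs_of_pos (inv_pos.2 hw0), smul_eq_mul]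
  have hLwtail : ∫⁻ y in {y : ℝ | 1 / w ^ α < |y|}, ENNReal.ofReal (L (w * y)) ≤
      ENNReal.ofReal (w⁻¹ * (M₁ * w ^ (-α₀))) := by
    rw [← ofReal_integral_eq_lintegral_ofReal hLw.integrableOn
      (Eventually.of_forall fun y => hLnonneg _)]
    apply ENNReal.ofReal_le_ofReal
    rw [inv_mul_eq_div, le_div_iff₀' hw0]
    exact hW₁ w hwW₁
  have hLwmeas : Measurable fun y => ENNReal.ofReal (L (w * y)) :=
    (hLmeas.comp (measurable_const_mul w)).ennreal_ofReal
  have hE1 := (lintegral_sampled_le htmono hw0 hLmeas (ENNReal.ofReal (w / δ)) hK).trans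
    (lintegral_split_le hLwmeas (ENNReal.ofReal (w / δ)) _ _ (hKω (1 / w ^ α)) hKI)
  have hE2 := lintegral_average_le hK (hKω (Δ / w))
  have hE2meas : Measurable fun x => ∫⁻ v in Set.Ioc 0 (Δ / w), K v x := hK.lintegral_prod_left'
  have hE3 : ∫⁻ x, ENNReal.ofReal (w ^ (-θ₀) / 3 * φ (2 * lam * |f x|)) =
      ENNReal.ofReal (w ^ (-θ₀) / 3 * Iφ) := by
    rw [← ofReal_integral_eq_lintegral_ofReal (hφint.const_mul _)
      (Eventually.of_forall fun x => mul_nonneg (by positivity) (hφ.nonneg (by positivity))),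
      integral_const_mul]
  have hE3meas : Measurable fun x => ENNReal.ofReal (w ^ (-θ₀) / 3 * φ (2 * lam * |f x|)) :=
    (((hφ.continuous_abs (by positivity)).measurable.comp hfmeas).const_mul _).ennreal_ofReal
  have hω1 := hω0 (1 / w ^ α)
  have hω2 := hω0 (Δ / w)
  refine integral_le_of_lintegral_le (fun x => hφ.nonneg (abs_nonneg _)) (by positivity) ?_
  refine (lintegral_mono hpt).trans ?_
  rw [lintegral_add_right _ hE3meas,
    lintegral_add_right _ (((hE2meas.const_mul _).const_mul _).const_mul _),
    lintegral_const_mul' _ _ ENNReal.ofReal_ne_top, lintegral_const_mul' _ _ ENNReal.ofReal_ne_top,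
    lintegral_const_mul' _ _ ENNReal.ofReal_ne_top, lintegral_const_mul' _ _ ENNReal.ofReal_ne_top,
    hE3]
  rw [hLwall] at hE1
  have hE1' := hE1.trans (add_le_add_right (mul_le_mul_right hLwtail _) _)
  calc _ ≤ ENNReal.ofReal (3 * m)⁻¹ *
          (ENNReal.ofReal (w / δ) * ENNReal.ofReal (omegaMod η lam f (1 / w ^ α)) *
            ENNReal.ofReal (w⁻¹ * ∫ u, L u) +
          ENNReal.ofReal (w / δ) * ENNReal.ofReal Iη *
            ENNReal.ofReal (w⁻¹ * (M₁ * w ^ (-α₀)))) +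
        ENNReal.ofReal (3 * m)⁻¹ * (ENNReal.ofReal m * (ENNReal.ofReal (w / δ) *
          (ENNReal.ofReal (omegaMod η lam f (Δ / w)) * ENNReal.ofReal (Δ / w)))) +
        ENNReal.ofReal (w ^ (-θ₀) / 3 * Iφ) := by gcongr
    _ = ENNReal.ofReal ((3 * m)⁻¹ * (w / δ * omegaMod η lam f (1 / w ^ α) * (w⁻¹ * ∫ u, L u) +
          w / δ * Iη * (w⁻¹ * (M₁ * w ^ (-α₀)))) +
        (3 * m)⁻¹ * (m * (w / δ * (omegaMod η lam f (Δ / w) * (Δ / w)))) +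
        w ^ (-θ₀) / 3 * Iφ) := by
      have hwδ : 0 ≤ w / δ := by positivity
      have h3m : 0 ≤ (3 * m)⁻¹ := by positivity
      rw [ENNReal.ofReal_add (by positivity) (by positivity),
        ENNReal.ofReal_add (by positivity) (by positivity), ENNReal.ofReal_mul h3m,
        ENNReal.ofReal_mul h3m, ENNReal.ofReal_add (by positivity) (by positivity),
        ENNReal.ofReal_mul (mul_nonneg hwδ hω1), ENNReal.ofReal_mul hwδ,
        ENNReal.ofReal_mul (mul_nonneg hwδ hIη0), ENNReal.ofReal_mul hwδ,
        ENNReal.ofReal_mul hm.le, ENNReal.ofReal_mul hwδ, ENNReal.ofReal_mul hω2]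
    _ ≤ _ := by
      apply ENNReal.ofReal_le_ofReal
      apply le_of_eq
      field_simp
end
end

section
/- Let χ be a kernel satisfying (χ1)–(χ4) with Lipschitz condition (χ3) holding for ψ(u) = u, and suppose M_p(L) := ∫_ℝ L(u)|u|^p du < +∞ for some 1 ≤ p < ∞. Then for every f ∈ Lip(α, p) with 0 < α ≤ 1 and every sufficiently large w > 0, ‖S_w f − f‖_p ≤ δ^{−1/p} [2 m_{0,Π}(L)]^{(p−1)/p} [‖L‖₁ + M_p(L)]^{1/p} C₁ w^{−α} + δ^{−1/p} m_{0,Π}(L) C₁ Δ^{1/p} (Δ/w)^α + M₂ ‖f‖_p w^{−θ₀}, where m_{0,Π}(L) := sup_{u∈ℝ} ∑_{k∈ℤ} L(u − t_k) < +∞, C₁ > 0 is the Lipschitz constant of f, and M₂, θ₀ > 0 are the constants of condition (χ4). -/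
/-!
Fix a large `w`. Adding and subtracting `∑ χ(wx - t_k, f x)` and using the Lipschitz condition, the
error `|S_w f(x) - f(x)|` is at most `∑ L(wx - t_k) |mean_k f - f(x)|` plus `M₂ w^{-θ₀} |f(x)|`,
where `mean_k` is the mean value over the cell `(t_k / w, t_{k+1} / w]`. Inserting the translate
`f(u + x - t_k / w)` splits `|mean_k f - f(x)|` into two parts (`pointwise_error`).

* Comparing `f(u)` with `f(u + x - t_k / w)` (`translation_part`): Jensen's inequality and the
  substitution `y = x - t_k / w` reduce the `p`-th power of the norm to
  `m₀^{p-1} δ⁻¹ ∫ w L(wy) ω_p(f, |y|)^p dy`. Then `ω_p(f, |y|) ≤ (1 + w|y|) ω_p(f, 1/w)` and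
  `(1 + |z|)^p ≤ 2^{p-1} (1 + |z|^p)` give the first summand of the bound.
* Comparing `f(u + x - t_k / w)` with `f(x)` (`mean_part`): here `u - t_k / w` runs over an interval
  contained in `(0, Δ/w]`, so Jensen's inequality and Tonelli's theorem give the second summand.

Minkowski's inequality combines the parts. All estimates are carried out with `ENNReal`-valued
integrals of measurable majorants, so measurability of `S_w f`, which does not follow from the
hypotheses on `χ`, plays no role (`pNorm_le_of_lintegral`). Finiteness of `m₀` (`m0_lt_top`) follows
from the separation of the nodes, the boundedness of `L` near `0` and its moment of order `β₀`.
-/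

open MeasureTheory Filter Real Set

noncomputable section

/-- The `L^p`-norm `(∫ |g|^p)^{1/p}`. -/
def pNorm (p : ℝ) (g : ℝ → ℝ) : ℝ := (∫ x : ℝ, |g x| ^ p) ^ (1 / p)

/-- The `L^p`-modulus of smoothness of order one. -/
def omegaP (p : ℝ) (f : ℝ → ℝ) (d : ℝ) : ℝ :=
  ⨆ s : {s : ℝ // |s| ≤ d}, pNorm p (fun x => f (x + (s : ℝ)) - f x)

/-! ### Jensen inequalities and scaling -/

/-- Jensen's inequality with a nonnegative weight `a` of arbitrary total mass. -/
lemma weighted_jensen {X : Type*} [MeasurableSpace X] (μ : Measure X) {p : ℝ} (hp : 1 ≤ p)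
    {a g : X → ENNReal} (ha : AEMeasurable a μ) (hg : AEMeasurable g μ) :
    (∫⁻ x, a x * g x ∂μ) ^ p ≤ (∫⁻ x, a x ∂μ) ^ (p - 1) * ∫⁻ x, a x * g x ^ p ∂μ := by
  rcases hp.eq_or_lt with rfl | hp1
  · simp
  have hpq := Real.HolderConjugate.conjExponent hp1
  set q := p.conjExponent
  have hp0 : 0 < p := by linarith
  have hq0 : 0 < q := hpq.symm.pos
  have h := ENNReal.lintegral_mul_le_Lp_mul_Lq μ hpq
    (f := fun x => a x ^ (1 / p) * g x) (g := fun x => a x ^ (1 / q))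
    ((ha.pow_const _).mul hg) (ha.pow_const _)
  have e1 : ∀ x, ((fun x => a x ^ (1 / p) * g x) * (fun x => a x ^ (1 / q))) x = a x * g x := by
    intro x
    have : a x ^ (1 / p) * a x ^ (1 / q) = a x := by
      rw [← ENNReal.rpow_add_of_nonneg _ _ (by positivity) (by positivity)]
      have : 1 / p + 1 / q = 1 := by simpa using hpq.inv_add_inv_eq_one
      rw [this, ENNReal.rpow_one]
    simp only [Pi.mul_apply]
    rw [mul_right_comm, this]
  have e2 : ∀ x, (a x ^ (1 / p) * g x) ^ p = a x * g x ^ p := by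
    intro x
    rw [ENNReal.mul_rpow_of_nonneg _ _ hp0.le, ← ENNReal.rpow_mul, one_div_mul_cancel hp0.ne',
      ENNReal.rpow_one]
  have e3 : ∀ x, (a x ^ (1 / q)) ^ q = a x := by
    intro x
    rw [← ENNReal.rpow_mul, one_div_mul_cancel hq0.ne', ENNReal.rpow_one]
  simp only [e1, e2, e3] at h
  refine (ENNReal.rpow_le_rpow h hp0.le).trans_eq ?_
  have e4 : 1 / q * p = p - 1 := by
    have := hpq.inv_add_inv_eq_one
    have h5 : 1 / q = 1 - 1 / p := by simp; linarith
    rw [h5]; field_simp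
  rw [ENNReal.mul_rpow_of_nonneg _ _ hp0.le, ← ENNReal.rpow_mul, ← ENNReal.rpow_mul,
    one_div_mul_cancel hp0.ne', ENNReal.rpow_one, e4, mul_comm]

lemma weighted_jensen_tsum {p : ℝ} (hp : 1 ≤ p) (a g : ℤ → ENNReal) :
    (∑' k, a k * g k) ^ p ≤ (∑' k, a k) ^ (p - 1) * ∑' k, a k * g k ^ p := by
  simpa only [lintegral_count] using weighted_jensen (Measure.count (α := ℤ)) hp
    (a := a) (g := g) (measurable_of_countable _).aemeasurable
    (measurable_of_countable _).aemeasurable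

/-- Jensen's inequality for a mean value over `I`; the factor `c` plays the role of `1 / |I|`. -/
lemma mean_jensen {p : ℝ} (hp : 1 ≤ p) (c : ENNReal) (I : Set ℝ) (hc : c * volume I ≤ 1)
    {g : ℝ → ENNReal} (hg : Measurable g) :
    (c * ∫⁻ u in I, g u) ^ p ≤ c * ∫⁻ u in I, g u ^ p := by
  have h := weighted_jensen (volume.restrict I) hp (a := fun _ => c) (g := g)
    aemeasurable_const hg.aemeasurable
  rw [lintegral_const_mul _ hg, lintegral_const_mul _ (hg.pow_const p), lintegral_const,
    Measure.restrict_apply_univ] at h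
  refine h.trans ?_
  calc _ ≤ 1 * (c * ∫⁻ u in I, g u ^ p) := by
        gcongr
        exact ENNReal.rpow_le_one hc (by linarith)
    _ = _ := one_mul _

lemma lintegral_comp_mul_pos {w : ℝ} (hw : 0 < w) (g : ℝ → ENNReal) :
    ENNReal.ofReal w * ∫⁻ y, g (w * y) = ∫⁻ z, g z := by
  conv_rhs => rw [← Real.smul_map_volume_mul_left hw.ne']
  rw [lintegral_smul_measure, (measurableEmbedding_mulLeft₀ hw.ne').lintegral_map, abs_of_pos hw]
  rfl

/-! ### Finiteness of the discrete moment of order zero -/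

/-- `m_{0,Π}(L)` is finite: far from `u` the terms are controlled by the moment of order `β`, and
at most one node lies within distance `ε < δ / 2` of `u`, where `L` is bounded. -/
lemma m0_lt_top (t : ℤ → ℝ) (δ : ℝ) (hδ : 0 < δ) (hgap : ∀ k : ℤ, δ ≤ t (k + 1) - t k)
    (L : ℝ → ℝ) (hLnonneg : ∀ x : ℝ, 0 ≤ L x)
    (hLbd : ∃ ε > (0 : ℝ), ∃ B : ℝ, ∀ x : ℝ, |x| ≤ ε → L x ≤ B)
    (hL2 : ∃ β₀ > (0 : ℝ), dMoment t L β₀ < ⊤) :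
    (⨆ u : ℝ, ∑' k : ℤ, ENNReal.ofReal (L (u - t k))) < ⊤ := by
  obtain ⟨ε₀, hε₀, B, hB⟩ := hLbd
  obtain ⟨β, hβ, hm⟩ := hL2
  set ε := min ε₀ (δ / 3) with hε
  have hεpos : 0 < ε := lt_min hε₀ (by positivity)
  have hεδ : ε ≤ δ / 3 := min_le_right _ _
  have hstep : ∀ j k : ℤ, j < k → δ ≤ t k - t j := by
    have hmono : StrictMono t := by
      apply strictMono_int_of_lt_succ
      intro k; have := hgap k; linarith
    intro j k hjk
    have h1 : t (j + 1) ≤ t k := hmono.monotone (by omega)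
    have := hgap j
    linarith
  have key : ∀ u : ℝ, ∑' k : ℤ, ENNReal.ofReal (L (u - t k)) ≤
      ENNReal.ofReal ((ε ^ β)⁻¹) * dMoment t L β + ENNReal.ofReal B := by
    intro u
    set s : Set ℤ := {k | |u - t k| ≤ ε}
    have hs : s.Subsingleton := by
      intro j hj k hk
      have hj' := abs_le.1 (show |u - t j| ≤ ε from hj)
      have hk' := abs_le.1 (show |u - t k| ≤ ε from hk)
      rcases lt_trichotomy j k with h | h | h
      · have := hstep j k h; linarith
      · exact h
      · have := hstep k j h; linarith
    have hterm : ∀ k, ENNReal.ofReal (L (u - t k)) ≤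
        ENNReal.ofReal ((ε ^ β)⁻¹) * ENNReal.ofReal (L (u - t k) * |u - t k| ^ β)
          + s.indicator (fun _ => ENNReal.ofReal B) k := by
      intro k
      by_cases hk : k ∈ s
      · rw [Set.indicator_of_mem hk]
        exact le_add_left (ENNReal.ofReal_le_ofReal (hB _ (le_trans hk (min_le_left _ _))))
      · rw [Set.indicator_of_notMem hk, add_zero, ← ENNReal.ofReal_mul (by positivity)]
        apply ENNReal.ofReal_le_ofReal
        have hk' : ε < |u - t k| := not_le.1 hk
        have h1 : ε ^ β ≤ |u - t k| ^ β := Real.rpow_le_rpow hεpos.le hk'.le hβ.le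
        have h2 : 0 < ε ^ β := by positivity
        rw [inv_mul_eq_div, le_div_iff₀ h2]
        exact mul_le_mul_of_nonneg_left h1 (hLnonneg _)
    refine (ENNReal.tsum_le_tsum hterm).trans ?_
    rw [ENNReal.tsum_add, ENNReal.tsum_mul_left]
    gcongr
    · exact le_iSup (fun u : ℝ => ∑' k : ℤ, ENNReal.ofReal (L (u - t k) * |u - t k| ^ β)) u
    · rcases hs.eq_empty_or_singleton with h | ⟨j, h⟩
      · simp [h]
      · rw [h, tsum_eq_single j]
        · simp
        · intro k hk; simp [hk]
  refine (iSup_le key).trans_lt ?_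
  exact ENNReal.add_lt_top.2 ⟨ENNReal.mul_lt_top ENNReal.ofReal_lt_top hm, ENNReal.ofReal_lt_top⟩

/-! ### The `L^p`-norm and the modulus of smoothness -/

/-- A norm bound in `ENNReal` transfers to `pNorm`. No measurability of `g` is needed, since the
Bochner integral in `pNorm` is `0` when `|g|^p` is not integrable. -/
lemma pNorm_le_of_lintegral {p : ℝ} (hp : 1 ≤ p) (g : ℝ → ℝ) {R : ℝ} (hR : 0 ≤ R)
    (h : (∫⁻ x, ‖g x‖ₑ ^ p) ^ (1 / p) ≤ ENNReal.ofReal R) : pNorm p g ≤ R := by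
  have hp0 : 0 < p := by linarith
  unfold pNorm
  by_cases hi : Integrable (fun x => |g x| ^ p)
  · rw [← ENNReal.ofReal_le_ofReal_iff hR, ← ENNReal.ofReal_rpow_of_nonneg
      (integral_nonneg fun x => by positivity) (by positivity),
      ofReal_integral_eq_lintegral_ofReal hi (ae_of_all _ fun x => by positivity)]
    refine le_trans (le_of_eq ?_) h
    congr 2 with x
    rw [← ENNReal.ofReal_rpow_of_nonneg (abs_nonneg _) hp0.le, Real.enorm_eq_ofReal_abs]
  · rw [integral_undef hi, Real.zero_rpow (by positivity)]
    exact hR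

lemma memLp_of_integrable_rpow {p : ℝ} (hp : 1 ≤ p) {g : ℝ → ℝ} (hg : Measurable g)
    (hi : Integrable (fun x => |g x| ^ p)) : MemLp g (ENNReal.ofReal p) := by
  have hp0 : 0 < p := by linarith
  rw [← integrable_norm_rpow_iff hg.aestronglyMeasurable (by simpa using hp0) (by simp)]
  simpa [ENNReal.toReal_ofReal hp0.le] using hi

lemma ofReal_pNorm {p : ℝ} (hp : 1 ≤ p) {g : ℝ → ℝ} (hg : MemLp g (ENNReal.ofReal p)) :
    ENNReal.ofReal (pNorm p g) = eLpNorm g (ENNReal.ofReal p) volume := by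
  have hp0 : 0 < p := by linarith
  rw [hg.eLpNorm_eq_integral_rpow_norm (by simpa using hp0) (by simp)]
  simp [pNorm, ENNReal.toReal_ofReal hp0.le]

lemma eLpNorm_ofReal {p : ℝ} (hp : 1 ≤ p) (g : ℝ → ℝ) :
    eLpNorm g (ENNReal.ofReal p) volume = (∫⁻ x, ‖g x‖ₑ ^ p) ^ (1 / p) := by
  have hp0 : 0 < p := by linarith
  rw [eLpNorm_eq_lintegral_rpow_enorm_toReal (by simpa using hp0) (by simp),
    ENNReal.toReal_ofReal hp0.le]

lemma memLp_translate {p : ℝ} {f : ℝ → ℝ} (hf : MemLp f (ENNReal.ofReal p)) (h : ℝ) :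
    MemLp (fun x => f (x + h)) (ENNReal.ofReal p) :=
  hf.comp_measurePreserving (measurePreserving_add_right volume h)

lemma eLpNorm_translate {p : ℝ} {f : ℝ → ℝ} (hf : MemLp f (ENNReal.ofReal p)) (h : ℝ) :
    eLpNorm (fun x => f (x + h)) (ENNReal.ofReal p) volume
      = eLpNorm f (ENNReal.ofReal p) volume :=
  eLpNorm_comp_measurePreserving hf.1 (measurePreserving_add_right volume h)

/-- The supremum defining `omegaP` dominates each of its terms: it is bounded by `2‖f‖_p`. -/
lemma eLpNorm_diff_le_omegaP {p : ℝ} (hp : 1 ≤ p) {f : ℝ → ℝ} (hf : MemLp f (ENNReal.ofReal p))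
    {h d : ℝ} (hd : |h| ≤ d) :
    eLpNorm (fun x => f (x + h) - f x) (ENNReal.ofReal p) volume
      ≤ ENNReal.ofReal (omegaP p f d) := by
  have hmem : ∀ h, MemLp (fun x => f (x + h) - f x) (ENNReal.ofReal p) := fun h =>
    (memLp_translate hf h).sub hf
  rw [← ofReal_pNorm hp (hmem h)]
  apply ENNReal.ofReal_le_ofReal
  have hb : BddAbove (Set.range fun s : {s : ℝ // |s| ≤ d} =>
      pNorm p (fun x => f (x + (s : ℝ)) - f x)) := by
    refine ⟨2 * pNorm p f, ?_⟩
    rintro _ ⟨s, rfl⟩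
    have hn : 0 ≤ pNorm p f := by
      unfold pNorm
      exact Real.rpow_nonneg (integral_nonneg fun x => by positivity) _
    dsimp only
    rw [← ENNReal.ofReal_le_ofReal_iff (by positivity), ofReal_pNorm hp (hmem s), two_mul,
      ENNReal.ofReal_add hn hn, ofReal_pNorm hp hf]
    have := eLpNorm_sub_le (memLp_translate hf s).1 hf.1
      (show 1 ≤ ENNReal.ofReal p by simpa using hp)
    rwa [eLpNorm_translate hf] at this
  exact le_ciSup hb ⟨h, hd⟩

lemma eLpNorm_diff_nsmul_le {p : ℝ} (hp : 1 ≤ p) {f : ℝ → ℝ} (hf : MemLp f (ENNReal.ofReal p))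
    (h : ℝ) (n : ℕ) :
    eLpNorm (fun x => f (x + n * h) - f x) (ENNReal.ofReal p) volume
      ≤ n * eLpNorm (fun x => f (x + h) - f x) (ENNReal.ofReal p) volume := by
  induction n with
  | zero => simp
  | succ n ih =>
    have hm1 := (memLp_translate hf h).sub hf
    have e : (fun x => f (x + (n + 1 : ℕ) * h) - f x)
        = (fun x => (fun y => f (y + h) - f y) (x + n * h)) + fun x => f (x + n * h) - f x := by
      funext x
      simp only [Pi.add_apply]
      push_cast
      ring_nf
    rw [e]
    refine (eLpNorm_add_le (memLp_translate (f := fun y => f (y + h) - f y) hm1 _).1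
      ((memLp_translate hf _).sub hf).1 (by simpa using hp)).trans ?_
    rw [eLpNorm_translate (f := fun y => f (y + h) - f y) hm1]
    push_cast
    rw [add_mul, one_mul, add_comm]
    exact add_le_add ih le_rfl

/-- The inequality `ω_p(f, |y|) ≤ (1 + w|y|) ω_p(f, 1/w)`, obtained by cutting the translation by
`y` into `⌊w|y|⌋ + 1` equal ones. -/
lemma eLpNorm_diff_le_scaled {p : ℝ} (hp : 1 ≤ p) {f : ℝ → ℝ} (hf : MemLp f (ENNReal.ofReal p))
    {w : ℝ} (hw : 0 < w) {E : ENNReal}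
    (hE : ∀ h : ℝ, |h| ≤ 1 / w →
      eLpNorm (fun x => f (x + h) - f x) (ENNReal.ofReal p) volume ≤ E) (y : ℝ) :
    eLpNorm (fun x => f (x + y) - f x) (ENNReal.ofReal p) volume
      ≤ (1 + ENNReal.ofReal |w * y|) * E := by
  set n : ℕ := ⌊|w * y|⌋₊ + 1 with hn
  have hn0 : (0 : ℝ) < n := by rw [hn]; positivity
  have h1 : |w * y| ≤ n := by rw [hn]; push_cast; exact (Nat.lt_floor_add_one _).le
  have h2 : (n : ℝ) ≤ 1 + |w * y| := by
    rw [hn]; push_cast; linarith [Nat.floor_le (abs_nonneg (w * y))]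
  have h3 : |y / n| ≤ 1 / w := by
    rw [abs_div, abs_of_pos hn0, div_le_div_iff₀ hn0 hw]
    rw [abs_mul, abs_of_pos hw] at h1
    linarith
  have h4 := eLpNorm_diff_nsmul_le hp hf (y / n) n
  rw [mul_div_cancel₀ _ hn0.ne'] at h4
  refine h4.trans ?_
  gcongr
  · rw [← ENNReal.ofReal_one, ← ENNReal.ofReal_add zero_le_one (abs_nonneg _),
      ← ENNReal.ofReal_natCast]
    exact ENNReal.ofReal_le_ofReal h2
  · exact hE _ h3

lemma lintegral_diff_rpow_le {p : ℝ} (hp : 1 ≤ p) {f : ℝ → ℝ} {h : ℝ} {E : ENNReal}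
    (hE : eLpNorm (fun x => f (x + h) - f x) (ENNReal.ofReal p) volume ≤ E) :
    ∫⁻ x, ‖f (x + h) - f x‖ₑ ^ p ≤ E ^ p := by
  have hp0 : 0 < p := by linarith
  rw [eLpNorm_ofReal hp, one_div, ENNReal.rpow_inv_le_iff hp0] at hE
  exact hE

lemma mean_factor_mul_volume_le {a b w : ℝ} (hw : 0 < w) (hab : a < b) :
    ENNReal.ofReal (w / (b - a)) * volume (Set.Ioc (a / w) (b / w)) ≤ 1 := by
  rw [Real.volume_Ioc, ← ENNReal.ofReal_mul (div_nonneg hw.le (by linarith))]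
  apply le_of_eq
  rw [ENNReal.ofReal_eq_one]
  have : b - a ≠ 0 := by linarith
  field_simp

/-- Jensen's inequality applied to a weighted sum of mean values, first to the sum over the nodes
and then to each mean value. -/
lemma sampling_jensen {p : ℝ} (hp : 1 ≤ p) {t : ℤ → ℝ} {w : ℝ} (hw : 0 < w)
    (ht : ∀ k, t k < t (k + 1)) {m : ENNReal} (a : ℤ → ENNReal) (ha : ∑' k, a k ≤ m)
    {g : ℤ → ℝ → ENNReal} (hg : ∀ k, Measurable (g k)) :
    (∑' k, a k * (ENNReal.ofReal (w / (t (k + 1) - t k)) *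
        ∫⁻ u in Set.Ioc (t k / w) (t (k + 1) / w), g k u)) ^ p ≤
      m ^ (p - 1) * ∑' k, a k * (ENNReal.ofReal (w / (t (k + 1) - t k)) *
        ∫⁻ u in Set.Ioc (t k / w) (t (k + 1) / w), g k u ^ p) := by
  refine (weighted_jensen_tsum hp _ _).trans ?_
  gcongr with k
  exact mean_jensen hp _ _ (mean_factor_mul_volume_le hw (ht k)) (hg k)

/-! ### The three parts of the error -/

/-- The part of the error in which `f` is compared with its translate by `x - t_k / w`. After
Jensen and the substitution `y = x - t_k / w`, the cells `(t_k / w, t_{k+1} / w]` reassemble into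
the whole line and the integral of `w L(wy) ω_p(f, |y|)^p` remains. -/
lemma translation_part {p : ℝ} (hp : 1 ≤ p) {t : ℤ → ℝ} {δ w : ℝ} (hδ : 0 < δ) (hw : 0 < w)
    (hgap : ∀ k : ℤ, δ ≤ t (k + 1) - t k)
    {ℓ : ℝ → ENNReal} (hℓ : Measurable ℓ) {m : ENNReal} (hm : ∀ u, ∑' k, ℓ (u - t k) ≤ m)
    {f : ℝ → ℝ} (hfm : Measurable f) (hf : MemLp f (ENNReal.ofReal p)) {E : ENNReal}
    (hE : ∀ h : ℝ, |h| ≤ 1 / w →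
      eLpNorm (fun x => f (x + h) - f x) (ENNReal.ofReal p) volume ≤ E) :
    ∫⁻ x, (∑' k, ℓ (w * x - t k) * (ENNReal.ofReal (w / (t (k + 1) - t k)) *
        ∫⁻ u in Set.Ioc (t k / w) (t (k + 1) / w), ‖f (u + (x - t k / w)) - f u‖ₑ)) ^ p ≤
      m ^ (p - 1) * (ENNReal.ofReal (1 / δ) *
        (2 ^ (p - 1) * ((∫⁻ z, ℓ z) + ∫⁻ z, ℓ z * ENNReal.ofReal |z| ^ p)) * E ^ p) := by
  have hp0 : 0 < p := by linarith
  have ht : ∀ k, t k < t (k + 1) := fun k => by have := hgap k; linarith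
  have hmono : Monotone t := monotone_int_of_le_succ fun k => (ht k).le
  have hG : Measurable (Function.uncurry fun y u : ℝ => ‖f (u + y) - f u‖ₑ ^ p) := by
    unfold Function.uncurry; fun_prop
  -- `J k y` is the inner integral over the `k`-th cell, as a function of the translation `y`
  set J : ℤ → ℝ → ENNReal := fun k y =>
    ∫⁻ u in Set.Ioc (t k / w) (t (k + 1) / w), ‖f (u + y) - f u‖ₑ ^ p with hJ
  have hJm : ∀ k, Measurable (J k) := fun k => hG.lintegral_prod_right
  have hdisj : Pairwise (Function.onFun Disjoint
      fun k : ℤ => Set.Ioc (t k / w) (t (k + 1) / w)) := by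
    have h : Monotone fun k => t k / w := fun i j hij =>
      div_le_div_of_nonneg_right (hmono hij) hw.le
    exact h.pairwise_disjoint_on_Ioc_succ
  have hJsum : ∀ y, ∑' k, J k y ≤ ((1 + ENNReal.ofReal |w * y|) * E) ^ p := by
    intro y
    rw [hJ, ← lintegral_iUnion (fun k => measurableSet_Ioc) hdisj]
    exact (setLIntegral_le_lintegral _ _).trans
      (lintegral_diff_rpow_le hp (eLpNorm_diff_le_scaled hp hf hw hE y))
  have hck : ∀ k, ENNReal.ofReal (w / (t (k + 1) - t k)) ≤
      ENNReal.ofReal (1 / δ) * ENNReal.ofReal w := by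
    intro k
    rw [← ENNReal.ofReal_mul (by positivity)]
    apply ENNReal.ofReal_le_ofReal
    rw [one_div_mul_eq_div]
    exact div_le_div_of_nonneg_left hw.le hδ (hgap k)
  calc _ ≤ ∫⁻ x, m ^ (p - 1) * ∑' k, ℓ (w * x - t k) *
          (ENNReal.ofReal (w / (t (k + 1) - t k)) * J k (x - t k / w)) := by
        refine lintegral_mono fun x => ?_
        exact sampling_jensen hp hw ht _ (hm _) fun k => by fun_prop
    _ = m ^ (p - 1) * ∑' k, ∫⁻ x, ℓ (w * x - t k) *
          (ENNReal.ofReal (w / (t (k + 1) - t k)) * J k (x - t k / w)) := by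
        have hmeas : ∀ k, Measurable fun x => ℓ (w * x - t k) *
            (ENNReal.ofReal (w / (t (k + 1) - t k)) * J k (x - t k / w)) := by
          intro k
          have := hJm k
          fun_prop
        rw [lintegral_const_mul _ (Measurable.tsum hmeas),
          lintegral_tsum fun k => (hmeas k).aemeasurable]
    _ = m ^ (p - 1) * ∑' k, ∫⁻ y, ℓ (w * y) *
          (ENNReal.ofReal (w / (t (k + 1) - t k)) * J k y) := by
        congr 2 with k
        rw [← lintegral_sub_right_eq_self (fun y => ℓ (w * y) *
          (ENNReal.ofReal (w / (t (k + 1) - t k)) * J k y)) (t k / w)]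
        congr 1 with x
        rw [mul_sub, mul_div_cancel₀ _ hw.ne']
    _ ≤ m ^ (p - 1) * ∑' k, ∫⁻ y, ℓ (w * y) *
          (ENNReal.ofReal (1 / δ) * ENNReal.ofReal w * J k y) := by
        gcongr with k y
        exact hck k
    _ = m ^ (p - 1) * (ENNReal.ofReal (1 / δ) *
          (ENNReal.ofReal w * ∫⁻ y, ℓ (w * y) * ∑' k, J k y)) := by
        have hmeas : ∀ k, Measurable fun y => ℓ (w * y) * J k y := by
          intro k
          have := hJm k
          fun_prop
        congr 1
        rw [← mul_assoc]
        simp_rw [← ENNReal.tsum_mul_left]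
        rw [lintegral_tsum fun k => (hmeas k).aemeasurable, ← ENNReal.tsum_mul_left]
        congr 1 with k
        rw [← lintegral_const_mul _ (hmeas k)]
        congr 1 with y
        ring
    _ ≤ m ^ (p - 1) * (ENNReal.ofReal (1 / δ) *
          (ENNReal.ofReal w * ∫⁻ y, ℓ (w * y) * ((1 + ENNReal.ofReal |w * y|) * E) ^ p)) := by
        gcongr with y
        exact hJsum y
    _ = m ^ (p - 1) * (ENNReal.ofReal (1 / δ) *
          ∫⁻ z, ℓ z * ((1 + ENNReal.ofReal |z|) * E) ^ p) := by
        rw [lintegral_comp_mul_pos hw fun z => ℓ z * ((1 + ENNReal.ofReal |z|) * E) ^ p]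
    _ ≤ m ^ (p - 1) * (ENNReal.ofReal (1 / δ) *
          ∫⁻ z, 2 ^ (p - 1) * (ℓ z + ℓ z * ENNReal.ofReal |z| ^ p) * E ^ p) := by
        gcongr 3 with z
        rw [ENNReal.mul_rpow_of_nonneg _ _ hp0.le, ← mul_assoc]
        refine mul_le_mul_left ?_ _
        calc _ ≤ ℓ z * (2 ^ (p - 1) * (1 ^ p + ENNReal.ofReal |z| ^ p)) := by
              gcongr
              exact ENNReal.rpow_add_le_mul_rpow_add_rpow _ _ hp
          _ = _ := by rw [ENNReal.one_rpow]; ring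
    _ = _ := by
        have h1 : Measurable fun z => ℓ z * ENNReal.ofReal |z| ^ p := by fun_prop
        have h2 : Measurable fun z => ℓ z + ℓ z * ENNReal.ofReal |z| ^ p := hℓ.add h1
        rw [lintegral_mul_const _ (h2.const_mul _), lintegral_const_mul _ h2,
          lintegral_add_left hℓ]
        ring

/-- The part of the error in which the mean values of `f` over `[x, x + Δ_k / w]` are compared
with `f x`. -/
lemma mean_part {p : ℝ} (hp : 1 ≤ p) {t : ℤ → ℝ} {δ Δ w : ℝ} (hδ : 0 < δ)
    (hw : 0 < w) (hgap : ∀ k : ℤ, δ ≤ t (k + 1) - t k ∧ t (k + 1) - t k ≤ Δ)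
    {ℓ : ℝ → ENNReal} {m : ENNReal} (hm : ∀ u, ∑' k, ℓ (u - t k) ≤ m)
    {f : ℝ → ℝ} (hfm : Measurable f) {E : ENNReal}
    (hE : ∀ h : ℝ, |h| ≤ Δ / w →
      eLpNorm (fun x => f (x + h) - f x) (ENNReal.ofReal p) volume ≤ E) :
    ∫⁻ x, (∑' k, ℓ (w * x - t k) * (ENNReal.ofReal (w / (t (k + 1) - t k)) *
        ∫⁻ u in Set.Ioc (t k / w) (t (k + 1) / w), ‖f (u + (x - t k / w)) - f x‖ₑ)) ^ p ≤
      m ^ p * (ENNReal.ofReal (Δ / δ) * E ^ p) := by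
  have hp0 : 0 < p := by linarith
  have ht : ∀ k, t k < t (k + 1) := fun k => by have := (hgap k).1; linarith
  have hG : Measurable (Function.uncurry fun x v : ℝ => ‖f (x + v) - f x‖ₑ ^ p) := by
    unfold Function.uncurry; fun_prop
  have hmm : m ^ (p - 1) * m = m ^ p := by
    nth_rewrite 2 [← ENNReal.rpow_one m]
    rw [← ENNReal.rpow_add_of_nonneg _ _ (by linarith) zero_le_one]
    congr 1; ring
  have hpt : ∀ x, (∑' k, ℓ (w * x - t k) * (ENNReal.ofReal (w / (t (k + 1) - t k)) *
        ∫⁻ u in Set.Ioc (t k / w) (t (k + 1) / w), ‖f (u + (x - t k / w)) - f x‖ₑ)) ^ p ≤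
      m ^ p * (ENNReal.ofReal (w / δ) * ∫⁻ v in Set.Ioc 0 (Δ / w), ‖f (x + v) - f x‖ₑ ^ p) := by
    intro x
    refine (sampling_jensen hp hw ht _ (hm _) fun k => by fun_prop).trans ?_
    rw [← hmm, mul_assoc]
    gcongr
    refine le_trans ?_ (mul_le_mul_left (hm (w * x)) _)
    rw [← ENNReal.tsum_mul_right]
    refine ENNReal.tsum_le_tsum fun k => ?_
    refine mul_le_mul_right (mul_le_mul' ?_ ?_) _
    · exact ENNReal.ofReal_le_ofReal (div_le_div_of_nonneg_left hw.le hδ (hgap k).1)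
    · have hpre : (fun u => u - t k / w) ⁻¹' Set.Ioc 0 ((t (k + 1) - t k) / w)
          = Set.Ioc (t k / w) (t (k + 1) / w) := by
        rw [Set.preimage_sub_const_Ioc, sub_div]; simp
      have := (measurePreserving_sub_right volume (t k / w)).setLIntegral_comp_preimage
        (measurableSet_Ioc (a := 0) (b := (t (k + 1) - t k) / w))
        (f := fun v => ‖f (x + v) - f x‖ₑ ^ p) (by fun_prop)
      rw [hpre] at this
      have e : ∀ u, u + (x - t k / w) = x + (u - t k / w) := fun u => by ring
      simp_rw [e]
      rw [this]
      apply lintegral_mono_set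
      apply Set.Ioc_subset_Ioc_right
      exact div_le_div_of_nonneg_right (hgap k).2 hw.le
  calc _ ≤ ∫⁻ x, m ^ p * (ENNReal.ofReal (w / δ) *
          ∫⁻ v in Set.Ioc 0 (Δ / w), ‖f (x + v) - f x‖ₑ ^ p) := lintegral_mono hpt
    _ = m ^ p * (ENNReal.ofReal (w / δ) *
          ∫⁻ v in Set.Ioc 0 (Δ / w), ∫⁻ x, ‖f (x + v) - f x‖ₑ ^ p) := by
        rw [lintegral_const_mul _ (hG.lintegral_prod_right.const_mul _),
          lintegral_const_mul _ hG.lintegral_prod_right, lintegral_lintegral_swap hG.aemeasurable]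
    _ ≤ m ^ p * (ENNReal.ofReal (w / δ) * ∫⁻ _ in Set.Ioc 0 (Δ / w), E ^ p) := by
        gcongr 2
        refine setLIntegral_mono measurable_const fun v hv => ?_
        refine lintegral_diff_rpow_le hp (hE v ?_)
        rw [abs_of_pos hv.1]
        exact hv.2
    _ = _ := by
        rw [lintegral_const, Measure.restrict_apply_univ, Real.volume_Ioc, sub_zero,
          mul_left_comm (ENNReal.ofReal (w / δ)), ← ENNReal.ofReal_mul (by positivity),
          mul_comm (E ^ p)]
        congr 3
        field_simp

/-- Pointwise decomposition of the error into the translation part, the mean value part and the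
defect of `∑ χ(wx - t_k, f x)` from `f x`. -/
lemma pointwise_error {t : ℤ → ℝ} (ht : ∀ k, t k < t (k + 1)) {χ : ℝ → ℝ → ℝ} {L : ℝ → ℝ}
    (hχ2 : ∀ x : ℝ, χ x 0 = 0) (hLnonneg : ∀ x : ℝ, 0 ≤ L x)
    (hχ3 : ∀ x u v : ℝ, |χ x u - χ x v| ≤ L x * |u - v|)
    {f : ℝ → ℝ} (hfm : Measurable f) (hfloc : LocallyIntegrable f) {w κ : ℝ} (hw : 0 < w) (x : ℝ)
    (hχ1 : Summable (fun k : ℤ => χ (w * x - t k) (f x)))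
    (hχ4 : ∀ u : ℝ, u ≠ 0 → |(∑' k : ℤ, χ (w * x - t k) u) / u - 1| ≤ κ)
    (hconv : Summable (fun k : ℤ => χ (w * x - t k)
      ((w / (t (k + 1) - t k)) * ∫ u in (t k / w)..(t (k + 1) / w), f u))) :
    ‖SwOp t χ f w x - f x‖ₑ ≤
      (∑' k, ENNReal.ofReal (L (w * x - t k)) * (ENNReal.ofReal (w / (t (k + 1) - t k)) *
        ∫⁻ u in Set.Ioc (t k / w) (t (k + 1) / w), ‖f (u + (x - t k / w)) - f u‖ₑ)) +
      (∑' k, ENNReal.ofReal (L (w * x - t k)) * (ENNReal.ofReal (w / (t (k + 1) - t k)) *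
        ∫⁻ u in Set.Ioc (t k / w) (t (k + 1) / w), ‖f (u + (x - t k / w)) - f x‖ₑ)) +
      ENNReal.ofReal κ * ‖f x‖ₑ := by
  have hdefect : ‖(∑' k : ℤ, χ (w * x - t k) (f x)) - f x‖ₑ ≤ ENNReal.ofReal κ * ‖f x‖ₑ := by
    by_cases h0 : f x = 0
    · simp [h0, hχ2]
    · have h1 := hχ4 _ h0
      have e : (∑' k : ℤ, χ (w * x - t k) (f x)) - f x
          = ((∑' k : ℤ, χ (w * x - t k) (f x)) / f x - 1) * f x := by field_simp
      rw [e, enorm_mul, Real.enorm_eq_ofReal_abs]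
      gcongr
  have hmean : ∀ k, ‖(w / (t (k + 1) - t k)) * (∫ u in (t k / w)..(t (k + 1) / w), f u) - f x‖ₑ
      ≤ ENNReal.ofReal (w / (t (k + 1) - t k)) *
          (∫⁻ u in Set.Ioc (t k / w) (t (k + 1) / w), ‖f (u + (x - t k / w)) - f u‖ₑ) +
        ENNReal.ofReal (w / (t (k + 1) - t k)) *
          ∫⁻ u in Set.Ioc (t k / w) (t (k + 1) / w), ‖f (u + (x - t k / w)) - f x‖ₑ := by
    intro k
    have hd : 0 < t (k + 1) - t k := by have := ht k; linarith
    have hle : t k / w ≤ t (k + 1) / w := div_le_div_of_nonneg_right (ht k).le hw.le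
    have hint : IntervalIntegrable f volume (t k / w) (t (k + 1) / w) :=
      (intervalIntegrable_iff_integrableOn_Icc_of_le hle).2
        (hfloc.integrableOn_isCompact isCompact_Icc)
    have e : (w / (t (k + 1) - t k)) * (∫ u in (t k / w)..(t (k + 1) / w), f u) - f x
        = (w / (t (k + 1) - t k)) * ∫ u in (t k / w)..(t (k + 1) / w), (f u - f x) := by
      rw [intervalIntegral.integral_sub hint intervalIntegrable_const,
        intervalIntegral.integral_const, smul_eq_mul]
      field_simp
    rw [e, enorm_mul, Real.enorm_eq_ofReal_abs (w / _), abs_of_pos (div_pos hw hd), ← mul_add]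
    gcongr
    rw [intervalIntegral.integral_of_le hle]
    refine (enorm_integral_le_lintegral_enorm _).trans ?_
    rw [← lintegral_add_left (by fun_prop)]
    refine lintegral_mono fun u => ?_
    have e2 : f u - f x = -(f (u + (x - t k / w)) - f u) + (f (u + (x - t k / w)) - f x) := by
      ring
    rw [e2]
    refine (enorm_add_le _ _).trans ?_
    rw [enorm_neg]
  have e : SwOp t χ f w x - f x =
      (∑' k : ℤ, (χ (w * x - t k)
        ((w / (t (k + 1) - t k)) * ∫ u in (t k / w)..(t (k + 1) / w), f u)
          - χ (w * x - t k) (f x))) + ((∑' k : ℤ, χ (w * x - t k) (f x)) - f x) := by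
    rw [hconv.tsum_sub hχ1, SwOp]
    ring
  rw [e]
  refine (enorm_add_le _ _).trans (add_le_add ?_ hdefect)
  refine enorm_tsum_le_tsum_enorm.trans ?_
  rw [← ENNReal.tsum_add]
  refine ENNReal.tsum_le_tsum fun k => ?_
  rw [← mul_add]
  refine le_trans ?_ (mul_le_mul_right (hmean k) _)
  rw [Real.enorm_eq_ofReal_abs, Real.enorm_eq_ofReal_abs, ← ENNReal.ofReal_mul (hLnonneg _)]
  exact ENNReal.ofReal_le_ofReal (hχ3 _ _ _)

/-! ### The explicit constants and the conclusion -/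

lemma translation_constant {p δ m Λ C W : ℝ} (hp : 1 ≤ p) (hδ : 0 < δ) (hm : 0 ≤ m) (hΛ : 0 ≤ Λ)
    (hC : 0 ≤ C) (hW : 0 ≤ W) :
    (m ^ (p - 1) * (1 / δ * (2 ^ (p - 1) * Λ) * (C * W) ^ p)) ^ (1 / p) =
      δ ^ (-(1 / p)) * (2 * m) ^ ((p - 1) / p) * Λ ^ (1 / p) * C * W := by
  have hp0 : 0 < p := by linarith
  have e : m ^ (p - 1) * (1 / δ * (2 ^ (p - 1) * Λ) * (C * W) ^ p) =
      δ⁻¹ * (2 * m) ^ (p - 1) * Λ * (C * W) ^ p := by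
    rw [Real.mul_rpow (by norm_num) hm, one_div]; ring
  rw [e, Real.mul_rpow (by positivity) (by positivity), Real.mul_rpow (by positivity) hΛ,
    Real.mul_rpow (by positivity) (by positivity), ← Real.rpow_mul (by positivity),
    ← Real.rpow_mul (by positivity), mul_one_div_cancel hp0.ne', Real.rpow_one, mul_one_div,
    Real.inv_rpow hδ.le, Real.rpow_neg hδ.le]
  ring

lemma mean_constant {p δ Δ m C W : ℝ} (hp : 1 ≤ p) (hδ : 0 < δ) (hΔ : 0 ≤ Δ) (hm : 0 ≤ m)
    (hC : 0 ≤ C) (hW : 0 ≤ W) :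
    (m ^ p * (Δ / δ * (C * W) ^ p)) ^ (1 / p) =
      δ ^ (-(1 / p)) * m * C * Δ ^ (1 / p) * W := by
  have hp0 : 0 < p := by linarith
  rw [Real.mul_rpow (by positivity) (by positivity), Real.mul_rpow (by positivity) (by positivity),
    ← Real.rpow_mul (by positivity), ← Real.rpow_mul (by positivity), mul_one_div_cancel hp0.ne',
    Real.rpow_one, Real.rpow_one, Real.div_rpow hΔ hδ.le, Real.rpow_neg hδ.le]
  ring

/-- Corollary: order of approximation in `L^p(ℝ)` for `f ∈ Lip(α, p)`. -/
theorem lipschitz_order_lp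
    (t : ℤ → ℝ) (δ Δ : ℝ) (hδ : 0 < δ) (hδΔ : δ ≤ Δ)
    (hgap : ∀ k : ℤ, δ ≤ t (k + 1) - t k ∧ t (k + 1) - t k ≤ Δ)
    (htop : Tendsto t atTop atTop) (hbot : Tendsto t atBot atBot)
    (χ : ℝ → ℝ → ℝ) (L : ℝ → ℝ)
    -- (χ1)
    (hχ1 : ∀ x u w : ℝ, 0 < w → Summable (fun k : ℤ => χ (w * x - t k) u))
    -- (χ2)
    (hχ2 : ∀ x : ℝ, χ x 0 = 0)
    -- (χ3) with ψ(u) = u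
    (hLmeas : Measurable L) (hLnonneg : ∀ x : ℝ, 0 ≤ L x)
    (hχ3 : ∀ x u v : ℝ, |χ x u - χ x v| ≤ L x * |u - v|)
    -- (χ4)
    (M₂ θ₀ : ℝ) (hM₂ : 0 < M₂) (hθ₀ : 0 < θ₀)
    (hχ4 : ∃ W : ℝ, ∀ w ≥ W, ∀ x u : ℝ, u ≠ 0 →
      |(∑' k : ℤ, χ (w * x - t k) u) / u - 1| ≤ M₂ * w ^ (-θ₀))
    -- (L1)
    (hL1 : Integrable L)
    (hLbd : ∃ ε > (0 : ℝ), ∃ B : ℝ, ∀ x : ℝ, |x| ≤ ε → L x ≤ B)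
    -- (L2)
    (hL2 : ∃ β₀ > (0 : ℝ), dMoment t L β₀ < ⊤)
    -- M_p(L) < +∞
    (p : ℝ) (hp : 1 ≤ p)
    (hMp : Integrable (fun u : ℝ => L u * |u| ^ p))
    -- f ∈ L^p(ℝ)
    (f : ℝ → ℝ) (hfmeas : Measurable f) (hfloc : LocallyIntegrable f)
    (hfp : Integrable (fun x : ℝ => |f x| ^ p))
    -- the series defining `S_w f` converges everywhere
    (hconv : ∀ w > (0 : ℝ), ∀ x : ℝ, Summable (fun k : ℤ => χ (w * x - t k)
      ((w / (t (k + 1) - t k)) * ∫ u in (t k / w)..(t (k + 1) / w), f u)))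
    -- f ∈ Lip(α, p), with Lipschitz constant C₁
    (α : ℝ) (hα : 0 < α) (hα1 : α ≤ 1) (C₁ : ℝ) (hC₁ : 0 < C₁)
    (hLip : ∃ t₀ > (0 : ℝ), ∀ s : ℝ, 0 < s → s ≤ t₀ → omegaP p f s ≤ C₁ * s ^ α) :
    ∃ W : ℝ, ∀ w ≥ W,
      pNorm p (fun x => SwOp t χ f w x - f x) ≤
        δ ^ (-(1 / p)) * (2 * m0R t L) ^ ((p - 1) / p)
            * ((∫ u : ℝ, L u) + ∫ u : ℝ, L u * |u| ^ p) ^ (1 / p)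
            * C₁ * (1 / w ^ α)
        + δ ^ (-(1 / p)) * m0R t L * C₁ * Δ ^ (1 / p) * (Δ / w) ^ α
        + M₂ * pNorm p f * w ^ (-θ₀) := by
  have hp0 : 0 < p := by linarith
  have hΔ : 0 < Δ := hδ.trans_le hδΔ
  have ht : ∀ k, t k < t (k + 1) := fun k => by have := (hgap k).1; linarith
  obtain ⟨W₄, hW₄⟩ := hχ4
  obtain ⟨t₀, ht₀, hLip⟩ := hLip
  have hf := memLp_of_integrable_rpow hp hfmeas hfp
  have hmtop := m0_lt_top t δ hδ (fun k => (hgap k).1) L hLnonneg hLbd hL2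
  have hm : ∀ u, ∑' k, ENNReal.ofReal (L (u - t k)) ≤ ENNReal.ofReal (m0R t L) := by
    intro u
    rw [m0R, ENNReal.ofReal_toReal hmtop.ne]
    exact le_iSup (fun u : ℝ => ∑' k : ℤ, ENNReal.ofReal (L (u - t k))) u
  have hm0 : 0 ≤ m0R t L := ENNReal.toReal_nonneg
  have hfn : 0 ≤ pNorm p f :=
    Real.rpow_nonneg (integral_nonneg fun x => by positivity) _
  have hI1 : 0 ≤ ∫ u, L u := integral_nonneg hLnonneg
  have hI2 : 0 ≤ ∫ u, L u * |u| ^ p :=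
    integral_nonneg fun u => mul_nonneg (hLnonneg u) (by positivity)
  have hΛ : (∫⁻ z, ENNReal.ofReal (L z)) + ∫⁻ z, ENNReal.ofReal (L z) * ENNReal.ofReal |z| ^ p
      = ENNReal.ofReal ((∫ u : ℝ, L u) + ∫ u : ℝ, L u * |u| ^ p) := by
    rw [ENNReal.ofReal_add hI1 hI2, ofReal_integral_eq_lintegral_ofReal hL1
      (ae_of_all _ hLnonneg), ofReal_integral_eq_lintegral_ofReal hMp
      (ae_of_all _ fun u => mul_nonneg (hLnonneg u) (by positivity))]
    congr 2 with z
    rw [ENNReal.ofReal_mul (hLnonneg z), ENNReal.ofReal_rpow_of_nonneg (abs_nonneg _) hp0.le]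
  -- beyond this threshold both `1 / w` and `Δ / w` lie in the range of the Lipschitz condition
  refine ⟨max (max 1 W₄) (max (1 / t₀) (Δ / t₀)), fun w hw => ?_⟩
  have hw1 : 1 ≤ w := le_trans (le_trans (le_max_left _ _) (le_max_left _ _)) hw
  have hwW : W₄ ≤ w := le_trans (le_trans (le_max_right _ _) (le_max_left _ _)) hw
  have hwt : 1 / t₀ ≤ w := le_trans (le_trans (le_max_left _ _) (le_max_right _ _)) hw
  have hwΔ : Δ / t₀ ≤ w := le_trans (le_trans (le_max_right _ _) (le_max_right _ _)) hw
  have hw0 : 0 < w := by linarith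
  have hE : ∀ s : ℝ, 0 < s → s ≤ t₀ → ∀ h : ℝ, |h| ≤ s →
      eLpNorm (fun x => f (x + h) - f x) (ENNReal.ofReal p) volume
        ≤ ENNReal.ofReal (C₁ * s ^ α) := fun s hs hst h hh =>
    (eLpNorm_diff_le_omegaP hp hf hh).trans (ENNReal.ofReal_le_ofReal (hLip s hs hst))
  have hE1 := hE (1 / w) (by positivity) ((one_div_le hw0 ht₀).2 hwt)
  have hE2 := hE (Δ / w) (by positivity) (by
    rw [div_le_iff₀ ht₀] at hwΔ
    rw [div_le_iff₀ hw0]; linarith)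
  have hℓ : Measurable fun x => ENNReal.ofReal (L x) := hLmeas.ennreal_ofReal
  set A : ℝ → ENNReal := fun x =>
    ∑' k, ENNReal.ofReal (L (w * x - t k)) * (ENNReal.ofReal (w / (t (k + 1) - t k)) *
      ∫⁻ u in Set.Ioc (t k / w) (t (k + 1) / w), ‖f (u + (x - t k / w)) - f u‖ₑ) with hA
  set B : ℝ → ENNReal := fun x =>
    ∑' k, ENNReal.ofReal (L (w * x - t k)) * (ENNReal.ofReal (w / (t (k + 1) - t k)) *
      ∫⁻ u in Set.Ioc (t k / w) (t (k + 1) / w), ‖f (u + (x - t k / w)) - f x‖ₑ) with hB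
  set D : ℝ → ENNReal := fun x => ENNReal.ofReal (M₂ * w ^ (-θ₀)) * ‖f x‖ₑ with hD
  have hAm : Measurable A := by
    refine Measurable.tsum fun k => Measurable.mul (by fun_prop) (Measurable.const_mul ?_ _)
    refine Measurable.lintegral_prod_right ?_
    unfold Function.uncurry
    fun_prop
  have hBm : Measurable B := by
    refine Measurable.tsum fun k => Measurable.mul (by fun_prop) (Measurable.const_mul ?_ _)
    refine Measurable.lintegral_prod_right ?_
    unfold Function.uncurry
    fun_prop
  have hDm : Measurable D := by fun_prop
  have hAA : (∫⁻ x, A x ^ p) ^ (1 / p) ≤ ENNReal.ofReal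
      (δ ^ (-(1 / p)) * (2 * m0R t L) ^ ((p - 1) / p)
            * ((∫ u : ℝ, L u) + ∫ u : ℝ, L u * |u| ^ p) ^ (1 / p)
            * C₁ * (1 / w ^ α)) := by
    have h := translation_part hp hδ hw0 (fun k => (hgap k).1) hℓ hm hfmeas hf hE1
    rw [hΛ, Real.div_rpow zero_le_one hw0.le, Real.one_rpow] at h
    refine (ENNReal.rpow_le_rpow h (by positivity)).trans_eq ?_
    rw [← translation_constant hp hδ hm0 (add_nonneg hI1 hI2) hC₁.le (by positivity),
      ← ENNReal.ofReal_ofNat 2, ENNReal.ofReal_rpow_of_nonneg hm0 (by linarith),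
      ENNReal.ofReal_rpow_of_nonneg (by positivity) hp0.le,
      ENNReal.ofReal_rpow_of_nonneg (by norm_num) (by linarith),
      ← ENNReal.ofReal_mul (by positivity), ← ENNReal.ofReal_mul (by positivity),
      ← ENNReal.ofReal_mul (by positivity), ← ENNReal.ofReal_mul (by positivity),
      ENNReal.ofReal_rpow_of_nonneg (by positivity) (by positivity)]
  have hBB : (∫⁻ x, B x ^ p) ^ (1 / p) ≤ ENNReal.ofReal
      (δ ^ (-(1 / p)) * m0R t L * C₁ * Δ ^ (1 / p) * (Δ / w) ^ α) := by
    have h := mean_part hp hδ hw0 hgap (ℓ := fun x => ENNReal.ofReal (L x)) hm hfmeas hE2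
    refine (ENNReal.rpow_le_rpow h (by positivity)).trans_eq ?_
    rw [← mean_constant hp hδ hΔ.le hm0 hC₁.le (by positivity),
      ENNReal.ofReal_rpow_of_nonneg hm0 hp0.le,
      ENNReal.ofReal_rpow_of_nonneg (by positivity) hp0.le,
      ← ENNReal.ofReal_mul (by positivity), ← ENNReal.ofReal_mul (by positivity),
      ENNReal.ofReal_rpow_of_nonneg (by positivity) (by positivity)]
  have hDD : (∫⁻ x, D x ^ p) ^ (1 / p) ≤ ENNReal.ofReal (M₂ * pNorm p f * w ^ (-θ₀)) := by
    have e : M₂ * pNorm p f * w ^ (-θ₀) = M₂ * w ^ (-θ₀) * pNorm p f := by ring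
    rw [e, ENNReal.ofReal_mul (by positivity), ofReal_pNorm hp hf, eLpNorm_ofReal hp]
    simp only [hD, ENNReal.mul_rpow_of_nonneg _ _ hp0.le]
    rw [lintegral_const_mul _ (by fun_prop), ENNReal.mul_rpow_of_nonneg _ _ (by positivity),
      ← ENNReal.rpow_mul, mul_one_div_cancel hp0.ne', ENNReal.rpow_one]
  refine pNorm_le_of_lintegral hp _ (by positivity) ?_
  have hpt : ∀ x, ‖SwOp t χ f w x - f x‖ₑ ≤ ((A + B) + D) x := fun x =>
    pointwise_error ht hχ2 hLnonneg hχ3 hfmeas hfloc hw0 x (hχ1 x (f x) w hw0)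
      (hW₄ w hwW x) (hconv w hw0 x)
  calc (∫⁻ x, ‖SwOp t χ f w x - f x‖ₑ ^ p) ^ (1 / p)
      ≤ (∫⁻ x, ((A + B) + D) x ^ p) ^ (1 / p) := by
        gcongr with x
        exact hpt x
    _ ≤ (∫⁻ x, A x ^ p) ^ (1 / p) + (∫⁻ x, B x ^ p) ^ (1 / p) + (∫⁻ x, D x ^ p) ^ (1 / p) :=
        (ENNReal.lintegral_Lp_add_le (hAm.add hBm).aemeasurable hDm.aemeasurable hp).trans
          (add_le_add (ENNReal.lintegral_Lp_add_le hAm.aemeasurable hBm.aemeasurable hp) le_rfl)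
    _ ≤ _ := by
        rw [ENNReal.ofReal_add (by positivity) (by positivity),
          ENNReal.ofReal_add (by positivity) (by positivity)]
        exact add_le_add (add_le_add hAA hBB) hDD
end
end

section
/- Let L: ℝ → [0,∞) be a measurable function satisfying (L1) and (L2), with ∑_{k∈ℤ} L(u − t_k) = 1 for every u ∈ ℝ, and suppose M_p(L) := ∫_ℝ L(u)|u|^p du < +∞ for some 1 ≤ p < ∞. Let S*_w be the linear sampling Kantorovich operator (S*_w f)(x) := ∑_{k∈ℤ} L(wx − t_k) (w/Δ_k) ∫_{t_k/w}^{t_{k+1}/w} f(u) du. Then for every f ∈ L^p(ℝ) and every sufficiently large w > 0, ‖S*_w f − f‖_p ≤ δ^{−1/p} [2 m_{0,Π}(L)]^{(p−1)/p} [‖L‖₁ + M_p(L)]^{1/p} ω_p(f, 1/w) + δ^{−1/p} m_{0,Π}(L) Δ^{1/p} ω_p(f, Δ/w), where m_{0,Π}(L) := sup_{u∈ℝ} ∑_{k∈ℤ} L(u − t_k) < +∞. -/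
/-!
Since `∑ L (u - t_k) = 1`, the constant `m0R t L` equals `1`, and with the cell
`[t_k/w, t_{k+1}/w]` parametrized by `t_k/w + d_k s`, `0 ≤ s ≤ 1`, `d_k = Δ_k/w`,
`S*_w f x - f x = ∑ L (w x - t_k) ∫ (f (t_k/w + d_k s) - f x) ds`.
Inserting `f (x + d_k s)` splits the error into two parts, `nodePart` (the difference
`f (t_k/w + d_k s) - f (x + d_k s)`) and `localPart` (the difference `f (x + d_k s) - f x`), and
Minkowski's inequality reduces the theorem to an `L^p` bound of each. To both of them Jensen's
inequality for the probability weights `L (w x - t_k) ds` is applied (`rpow_avg_le`).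

* `lintegral_localPart_le`: the mean over `[0, d_k]` is bounded by `w/δ` times the integral over
  `[0, Δ/w]`; Tonelli then gives `(Δ/δ) ω_p(f, Δ/w)^p`.
* `lintegral_nodePart_le`: the substitution `y = w x - t_k` and the disjointness of the cells give
  `δ⁻¹ ∫ L y ‖f (· + y/w) - f‖_p^p dy`. Cutting a translation into steps of length at most `1/w`
  gives `‖f (· + y/w) - f‖_p ≤ (1 + |y|) ω_p(f, 1/w)`, and `(1 + |y|)^p ≤ 2^(p-1) (1 + |y|^p)`
  produces the constant.

All estimates are carried out with `ENNReal`-valued integrals, so integrability is never an issue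
before the end; every `w ≥ 1` is large enough.
-/

open MeasureTheory Filter Real Set

noncomputable section

/-- The linear sampling Kantorovich operator `S*_w`. -/
def SwLin (t : ℤ → ℝ) (L : ℝ → ℝ) (f : ℝ → ℝ) (w x : ℝ) : ℝ :=
  ∑' k : ℤ, L (w * x - t k) *
    ((w / (t (k + 1) - t k)) * ∫ u in (t k / w)..(t (k + 1) / w), f u)

/-! ### Jensen's inequality for weighted means -/

lemma rpow_lintegral_le {α : Type*} [MeasurableSpace α] (μ : Measure α) [IsProbabilityMeasure μ]
    {p : ℝ} (hp : 1 ≤ p) {g : α → ENNReal} (hg : Measurable g) :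
    (∫⁻ a, g a ∂μ) ^ p ≤ ∫⁻ a, g a ^ p ∂μ := by
  have h := eLpNorm'_le_eLpNorm'_of_exponent_le (f := g) one_pos hp μ
    hg.aestronglyMeasurable
  simp only [eLpNorm', enorm_eq_self, ENNReal.rpow_one, div_one] at h
  rw [one_div] at h
  exact (ENNReal.le_rpow_inv_iff (by linarith)).1 h

lemma rpow_tsum_le {p : ℝ} (hp : 1 ≤ p) (c h : ℤ → ENNReal) (hc : ∑' k, c k = 1) :
    (∑' k, c k * h k) ^ p ≤ ∑' k, c k * h k ^ p := by
  have hP : IsProbabilityMeasure ((Measure.count : Measure ℤ).withDensity c) := by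
    constructor
    rw [withDensity_apply _ MeasurableSet.univ, Measure.restrict_univ, lintegral_count, hc]
  have key := rpow_lintegral_le ((Measure.count : Measure ℤ).withDensity c) hp
    (g := h) (measurable_of_countable _)
  rw [lintegral_withDensity_eq_lintegral_mul _ (measurable_of_countable _)
    (measurable_of_countable _), lintegral_withDensity_eq_lintegral_mul _
    (measurable_of_countable _) (measurable_of_countable _), lintegral_count,
    lintegral_count] at key
  simpa using key

lemma isProb_unit : IsProbabilityMeasure ((volume : Measure ℝ).restrict (Ioc 0 1)) :=
  ⟨by simp⟩

/-- Jensen's inequality for the joint average: a convex combination over `k` of means over the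
unit interval. -/
lemma rpow_avg_le {p : ℝ} (hp : 1 ≤ p) (c : ℤ → ENNReal) (hc : ∑' k, c k = 1)
    (G : ℤ → ℝ → ENNReal) (hG : ∀ k, Measurable (G k)) :
    (∑' k, c k * ∫⁻ s in Ioc (0 : ℝ) 1, G k s) ^ p
      ≤ ∑' k, c k * ∫⁻ s in Ioc (0 : ℝ) 1, G k s ^ p := by
  refine (rpow_tsum_le hp c _ hc).trans (ENNReal.tsum_le_tsum fun k => ?_)
  have := isProb_unit
  gcongr
  exact rpow_lintegral_le _ hp (hG k)

/-! ### Affine substitutions and cells of the partition -/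

lemma lintegral_comp_affine {F : ℝ → ENNReal} (hF : Measurable F) (a : ℝ) {c : ℝ} (hc : 0 < c) :
    ∫⁻ x, F (a + c * x) = ENNReal.ofReal c⁻¹ * ∫⁻ x, F x := by
  have h1 : ∫⁻ x, F (a + c * x) = ∫⁻ y, F (a + y) ∂(Measure.map (fun x => c * x) volume) := by
    rw [lintegral_map (by fun_prop) (by fun_prop)]
  rw [h1, Real.map_volume_mul_left hc.ne', lintegral_smul_measure,
    lintegral_add_left_eq_self (fun y => F y) a, abs_of_pos (inv_pos.2 hc), smul_eq_mul]

lemma lintegral_unit_comp_affine {F : ℝ → ENNReal} (hF : Measurable F) (a : ℝ) {c : ℝ}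
    (hc : 0 < c) :
    ∫⁻ s in Ioc (0 : ℝ) 1, F (a + c * s)
      = ENNReal.ofReal c⁻¹ * ∫⁻ u in Ioc a (a + c), F u := by
  rw [← lintegral_indicator measurableSet_Ioc, ← lintegral_indicator measurableSet_Ioc,
    ← lintegral_comp_affine (hF.indicator measurableSet_Ioc) a hc]
  congr 1
  ext s
  have : s ∈ Ioc (0 : ℝ) 1 ↔ a + c * s ∈ Ioc a (a + c) := by
    simp only [mem_Ioc, lt_add_iff_pos_right, add_le_add_iff_left]
    constructor
    · rintro ⟨h1, h2⟩
      exact ⟨mul_pos hc h1, by nlinarith⟩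
    · rintro ⟨h1, h2⟩
      exact ⟨pos_of_mul_pos_right h1 hc.le, by nlinarith⟩
  by_cases hs : s ∈ Ioc (0 : ℝ) 1
  · rw [indicator_of_mem hs, indicator_of_mem (this.1 hs)]
  · rw [indicator_of_notMem hs, indicator_of_notMem (fun h => hs (this.2 h))]

/-- The means of a nonnegative `F` over the cells `(t_k/w, t_{k+1}/w]` of the rescaled partition
sum to at most `w/δ` times its integral, since the cells are disjoint of length at least `δ/w`. -/
lemma tsum_cells_le {t : ℤ → ℝ} {δ : ℝ} (hδ : 0 < δ) (hgap : ∀ k, δ ≤ t (k + 1) - t k)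
    {w : ℝ} (hw : 0 < w) {F : ℝ → ENNReal} (hF : Measurable F) :
    ∑' k, ∫⁻ s in Ioc (0 : ℝ) 1, F (t k / w + (t (k + 1) - t k) / w * s)
      ≤ ENNReal.ofReal (w / δ) * ∫⁻ u, F u := by
  have hd : ∀ k, 0 < t (k + 1) - t k := fun k => hδ.trans_le (hgap k)
  have hmono : Monotone (fun k => t k / w) :=
    monotone_int_of_le_succ fun k => by
      have := hd k
      gcongr
      linarith
  have hdisj : Pairwise (Function.onFun Disjoint fun k : ℤ => Ioc (t k / w) (t (k + 1) / w)) :=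
    hmono.pairwise_disjoint_on_Ioc_succ
  calc _ ≤ ∑' k, ENNReal.ofReal (w / δ) * ∫⁻ u in Ioc (t k / w) (t (k + 1) / w), F u := by
        refine ENNReal.tsum_le_tsum fun k => ?_
        rw [lintegral_unit_comp_affine hF _ (div_pos (hd k) hw)]
        have e : t k / w + (t (k + 1) - t k) / w = t (k + 1) / w := by ring
        rw [e, inv_div]
        have := hgap k
        gcongr
    _ = ENNReal.ofReal (w / δ) * ∫⁻ u in ⋃ k, Ioc (t k / w) (t (k + 1) / w), F u := by
        rw [ENNReal.tsum_mul_left, lintegral_iUnion (fun _ => measurableSet_Ioc) hdisj]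
    _ ≤ _ := by
        gcongr
        exact Measure.restrict_le_self

/-! ### Translates and the modulus of smoothness -/

/-- The `L^p`-distance between `f` and its translate by `s`, as an extended nonnegative real. -/
def shiftDist (p : ℝ) (f : ℝ → ℝ) (s : ℝ) : ENNReal :=
  eLpNorm (fun x => f (x + s) - f x) (ENNReal.ofReal p) volume

lemma shiftDist_rpow {p : ℝ} (hp : 1 ≤ p) (f : ℝ → ℝ) (s : ℝ) :
    shiftDist p f s ^ p = ∫⁻ x, ‖f (x + s) - f x‖ₑ ^ p := by
  have hp0 : 0 < p := by linarith
  rw [shiftDist, eLpNorm_eq_lintegral_rpow_enorm_toReal (by simpa using hp0) ENNReal.ofReal_ne_top,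
    ENNReal.toReal_ofReal hp0.le, ← ENNReal.rpow_mul, one_div_mul_cancel hp0.ne', ENNReal.rpow_one]

lemma memLp_of_integrable {p : ℝ} (hp : 1 ≤ p) {f : ℝ → ℝ} (hf : Measurable f)
    (hfp : Integrable (fun x : ℝ => |f x| ^ p)) : MemLp f (ENNReal.ofReal p) volume := by
  have hp0 : 0 < p := by linarith
  rw [← integrable_norm_rpow_iff hf.aestronglyMeasurable (by simpa using hp0)
    ENNReal.ofReal_ne_top, ENNReal.toReal_ofReal hp0.le]
  simpa using hfp

lemma shift_measurePreserving (s : ℝ) :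
    MeasurePreserving (fun x : ℝ => x + s) volume volume := measurePreserving_add_right _ _

lemma memLp_shift {p : ℝ} {f : ℝ → ℝ}
    (hfL : MemLp f (ENNReal.ofReal p) volume) (s : ℝ) :
    MemLp (fun x => f (x + s) - f x) (ENNReal.ofReal p) volume :=
  (hfL.comp_measurePreserving (shift_measurePreserving s)).sub hfL

lemma ofReal_pNorm_shift {p : ℝ} (hp : 1 ≤ p) {f : ℝ → ℝ}
    (hfL : MemLp f (ENNReal.ofReal p) volume) (s : ℝ) :
    ENNReal.ofReal (pNorm p (fun x => f (x + s) - f x)) = shiftDist p f s := by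
  have hp0 : 0 < p := by linarith
  rw [shiftDist, (memLp_shift hfL s).eLpNorm_eq_integral_rpow_norm (by simpa using hp0)
    ENNReal.ofReal_ne_top, ENNReal.toReal_ofReal hp0.le, pNorm, one_div]
  simp only [Real.norm_eq_abs]

lemma pNorm_nonneg (p : ℝ) (g : ℝ → ℝ) : 0 ≤ pNorm p g :=
  Real.rpow_nonneg (integral_nonneg fun _ => Real.rpow_nonneg (abs_nonneg _) _) _

lemma omegaP_nonneg (p : ℝ) (f : ℝ → ℝ) (d : ℝ) : 0 ≤ omegaP p f d :=
  Real.iSup_nonneg fun _ => pNorm_nonneg _ _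

/-- The supremum defining `omegaP` is over a bounded family (by `2‖f‖_p`), so it dominates each
of its members. -/
lemma shiftDist_le_omegaP {p : ℝ} (hp : 1 ≤ p) {f : ℝ → ℝ}
    (hfL : MemLp f (ENNReal.ofReal p) volume) {s d : ℝ} (hs : |s| ≤ d) :
    shiftDist p f s ≤ ENNReal.ofReal (omegaP p f d) := by
  rw [← ofReal_pNorm_shift hp hfL]
  apply ENNReal.ofReal_le_ofReal
  refine le_ciSup (f := fun s : {s : ℝ // |s| ≤ d} => pNorm p (fun x => f (x + (s : ℝ)) - f x))
    ⟨(2 * eLpNorm f (ENNReal.ofReal p) volume).toReal, ?_⟩ ⟨s, hs⟩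
  rintro _ ⟨r, rfl⟩
  have hfin : 2 * eLpNorm f (ENNReal.ofReal p) volume ≠ ⊤ :=
    ENNReal.mul_ne_top (by simp) hfL.eLpNorm_ne_top
  rw [← ENNReal.ofReal_le_iff_le_toReal hfin, ofReal_pNorm_shift hp hfL, shiftDist]
  have hsh := hfL.comp_measurePreserving (shift_measurePreserving r)
  refine (eLpNorm_sub_le hsh.aestronglyMeasurable hfL.aestronglyMeasurable
    (by simpa using hp)).trans ?_
  rw [eLpNorm_comp_measurePreserving hfL.aestronglyMeasurable (shift_measurePreserving r), two_mul]

lemma shiftDist_nat_mul {p : ℝ} (hp : 1 ≤ p) {f : ℝ → ℝ}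
    (hfL : MemLp f (ENNReal.ofReal p) volume) (h : ℝ) (n : ℕ) :
    shiftDist p f (n * h) ≤ n * shiftDist p f h := by
  induction n with
  | zero => simp [shiftDist]
  | succ n ih =>
    have e : (fun x => f (x + ((n + 1 : ℕ) : ℝ) * h) - f x)
        = ((fun y => f (y + h) - f y) ∘ (fun x => x + n * h))
          + (fun x => f (x + n * h) - f x) := by
      ext x
      have : x + ((n + 1 : ℕ) : ℝ) * h = x + n * h + h := by push_cast; ring
      simp only [this, Pi.add_apply, Function.comp_apply]
      ring
    rw [shiftDist, e]
    have hm := memLp_shift hfL h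
    refine (eLpNorm_add_le
      (hm.comp_measurePreserving (shift_measurePreserving _)).aestronglyMeasurable
      (memLp_shift hfL (n * h)).aestronglyMeasurable (by simpa using hp)).trans ?_
    rw [eLpNorm_comp_measurePreserving hm.aestronglyMeasurable (shift_measurePreserving _)]
    push_cast
    rw [add_mul, one_mul, add_comm]
    exact add_le_add ih le_rfl

/-- The modulus of smoothness satisfies `ω(λd) ≤ (1+λ) ω(d)`; here for single translates, with
`d = 1/w` and `λ = |y|`. -/
lemma shiftDist_le_one_add {p : ℝ} (hp : 1 ≤ p) {f : ℝ → ℝ}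
    (hfL : MemLp f (ENNReal.ofReal p) volume) {w : ℝ} (hw : 0 < w) (y : ℝ) :
    shiftDist p f (y / w)
      ≤ (1 + ENNReal.ofReal |y|) * ENNReal.ofReal (omegaP p f (1 / w)) := by
  -- Split the translation into `n = ⌊|y|⌋ + 1` equal steps, each of length at most `1/w`.
  set n : ℕ := ⌊|y|⌋₊ + 1 with hn
  have hn0 : (0 : ℝ) < n := by positivity
  have hyn : |y| ≤ n := by
    rw [hn]; push_cast; exact (Nat.lt_floor_add_one _).le
  have hny : (n : ℝ) ≤ 1 + |y| := by
    rw [hn]; push_cast; linarith [Nat.floor_le (abs_nonneg y)]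
  have e : y / w = n * (y / (n * w)) := by field_simp
  have hs : |y / (n * w)| ≤ 1 / w := by
    rw [abs_div, abs_of_pos (mul_pos hn0 hw), div_le_div_iff₀ (mul_pos hn0 hw) hw, one_mul]
    gcongr
  rw [e]
  refine (shiftDist_nat_mul hp hfL _ n).trans ?_
  refine mul_le_mul' ?_ (shiftDist_le_omegaP hp hfL hs)
  rw [← ENNReal.ofReal_one, ← ENNReal.ofReal_add zero_le_one (abs_nonneg _),
    ← ENNReal.ofReal_natCast]
  exact ENNReal.ofReal_le_ofReal hny

/-! ### Splitting the error -/

/-- The part of the averaged increment comparing `f` near the node `t_k/w` with `f` near `x`,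
both displaced by the same amount. -/
def nodePart (t : ℤ → ℝ) (L f : ℝ → ℝ) (w x : ℝ) : ENNReal :=
  ∑' k : ℤ, ENNReal.ofReal (L (w * x - t k)) * ∫⁻ s in Ioc (0 : ℝ) 1,
    ‖f (t k / w + (t (k + 1) - t k) / w * s) - f (x + (t (k + 1) - t k) / w * s)‖ₑ

/-- The part of the averaged increment comparing `f x` with `f` at displacements of `x` of at most
one cell length. -/
def localPart (t : ℤ → ℝ) (L f : ℝ → ℝ) (w x : ℝ) : ENNReal :=
  ∑' k : ℤ, ENNReal.ofReal (L (w * x - t k)) * ∫⁻ s in Ioc (0 : ℝ) 1,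
    ‖f (x + (t (k + 1) - t k) / w * s) - f x‖ₑ

lemma measurable_nodePart (t : ℤ → ℝ) {L f : ℝ → ℝ} (hL : Measurable L) (hf : Measurable f)
    (w : ℝ) : Measurable (nodePart t L f w) := by
  refine Measurable.tsum fun k => Measurable.mul (by fun_prop) ?_
  exact Measurable.lintegral_prod_right' (f := fun z : ℝ × ℝ =>
    ‖f (t k / w + (t (k + 1) - t k) / w * z.2) - f (z.1 + (t (k + 1) - t k) / w * z.2)‖ₑ)
    (by fun_prop)

lemma measurable_localPart (t : ℤ → ℝ) {L f : ℝ → ℝ} (hL : Measurable L) (hf : Measurable f)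
    (w : ℝ) : Measurable (localPart t L f w) := by
  refine Measurable.tsum fun k => Measurable.mul (by fun_prop) ?_
  exact Measurable.lintegral_prod_right' (f := fun z : ℝ × ℝ =>
    ‖f (z.1 + (t (k + 1) - t k) / w * z.2) - f z.1‖ₑ) (by fun_prop)

lemma tsum_ofReal_eq_one {t : ℤ → ℝ} {L : ℝ → ℝ} (hLnonneg : ∀ x, 0 ≤ L x)
    (hLsum : ∀ u : ℝ, HasSum (fun k : ℤ => L (u - t k)) 1) (u : ℝ) :
    ∑' k, ENNReal.ofReal (L (u - t k)) = 1 := by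
  rw [← ENNReal.ofReal_tsum_of_nonneg (fun k => hLnonneg _) (hLsum u).summable, (hLsum u).tsum_eq,
    ENNReal.ofReal_one]

lemma m0R_eq_one {t : ℤ → ℝ} {L : ℝ → ℝ} (hLnonneg : ∀ x, 0 ≤ L x)
    (hLsum : ∀ u : ℝ, HasSum (fun k : ℤ => L (u - t k)) 1) : m0R t L = 1 := by
  simp [m0R, tsum_ofReal_eq_one hLnonneg hLsum]

/-- The `k`-th mean value minus `f x`, after parametrizing the cell by the unit interval. -/
lemma enorm_mean_sub_le {f : ℝ → ℝ} (hf : Measurable f) (hfloc : LocallyIntegrable f) {a b w : ℝ}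
    (hab : a < b) (hw : 0 < w) (x : ℝ) :
    ‖(w / (b - a)) * (∫ u in (a / w)..(b / w), f u) - f x‖ₑ
      ≤ (∫⁻ s in Ioc (0 : ℝ) 1, ‖f (a / w + (b - a) / w * s) - f (x + (b - a) / w * s)‖ₑ)
        + ∫⁻ s in Ioc (0 : ℝ) 1, ‖f (x + (b - a) / w * s) - f x‖ₑ := by
  have hd : 0 < (b - a) / w := div_pos (by linarith) hw
  have e1 : (w / (b - a)) * (∫ u in (a / w)..(b / w), f u)
      = ∫ s in Ioc (0 : ℝ) 1, f (a / w + (b - a) / w * s) := by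
    rw [← intervalIntegral.integral_of_le zero_le_one,
      intervalIntegral.integral_comp_add_mul f hd.ne' (a / w), inv_div, smul_eq_mul]
    congr 2 <;> ring
  have hint : IntegrableOn (fun s => f (a / w + (b - a) / w * s)) (Ioc (0 : ℝ) 1) := by
    refine ⟨(by fun_prop : Measurable _).aestronglyMeasurable, ?_⟩
    rw [HasFiniteIntegral, lintegral_unit_comp_affine (F := fun u => ‖f u‖ₑ) (by fun_prop) _ hd]
    refine ENNReal.mul_lt_top ENNReal.ofReal_lt_top ?_
    have := (hfloc.integrableOn_isCompact (isCompact_Icc (a := a / w)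
      (b := a / w + (b - a) / w))).mono_set Ioc_subset_Icc_self
    exact this.hasFiniteIntegral
  have := isProb_unit
  have e2 : f x = ∫ s in Ioc (0 : ℝ) 1, f x := by simp
  rw [e1]
  nth_rewrite 1 [e2]
  rw [← integral_sub hint (integrable_const _)]
  refine (enorm_integral_le_lintegral_enorm _).trans ?_
  rw [← lintegral_add_left (by fun_prop)]
  refine lintegral_mono fun s => ?_
  refine le_trans (le_of_eq ?_) (enorm_add_le _ _)
  congr 1
  ring

lemma enorm_SwLin_sub_le {t : ℤ → ℝ} {L f : ℝ → ℝ} (ht : ∀ k, t k < t (k + 1))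
    (hLnonneg : ∀ x, 0 ≤ L x)
    (hLsum : ∀ u : ℝ, HasSum (fun k : ℤ => L (u - t k)) 1)
    (hf : Measurable f) (hfloc : LocallyIntegrable f) {w : ℝ} (hw : 0 < w) (x : ℝ)
    (hconv : Summable (fun k : ℤ => L (w * x - t k) *
      ((w / (t (k + 1) - t k)) * ∫ u in (t k / w)..(t (k + 1) / w), f u))) :
    ‖SwLin t L f w x - f x‖ₑ ≤ nodePart t L f w x + localPart t L f w x := by
  have e : SwLin t L f w x - f x = ∑' k : ℤ, L (w * x - t k) *
      ((w / (t (k + 1) - t k)) * (∫ u in (t k / w)..(t (k + 1) / w), f u) - f x) := by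
    have h2 := (hLsum (w * x)).mul_right (f x)
    rw [one_mul] at h2
    rw [SwLin, ← h2.tsum_eq, ← hconv.tsum_sub h2.summable]
    simp only [h2.tsum_eq, mul_sub]
  rw [e, nodePart, localPart, ← ENNReal.tsum_add]
  refine enorm_tsum_le_tsum_enorm.trans (ENNReal.tsum_le_tsum fun k => ?_)
  rw [enorm_mul, Real.enorm_of_nonneg (hLnonneg _), ← mul_add]
  gcongr
  exact enorm_mean_sub_le hf hfloc (ht k) hw x

/-! ### The `L^p` bounds of the two parts -/

/-- After Jensen each mean over `[0, Δ_k/w]` is at most `w/δ` times the integral over `[0, Δ/w]`,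
which does not depend on `k`, so the weights sum out. -/
lemma lintegral_localPart_le {t : ℤ → ℝ} {δ Δ : ℝ} (hδ : 0 < δ)
    (hgap : ∀ k : ℤ, δ ≤ t (k + 1) - t k ∧ t (k + 1) - t k ≤ Δ) {L f : ℝ → ℝ}
    (hLnonneg : ∀ x, 0 ≤ L x)
    (hLsum : ∀ u : ℝ, HasSum (fun k : ℤ => L (u - t k)) 1)
    {p : ℝ} (hp : 1 ≤ p) (hf : Measurable f)
    (hfL : MemLp f (ENNReal.ofReal p) volume) {w : ℝ} (hw : 0 < w) :
    ∫⁻ x, localPart t L f w x ^ p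
      ≤ ENNReal.ofReal (Δ / δ) * ENNReal.ofReal (omegaP p f (Δ / w)) ^ p := by
  have hp0 : 0 < p := by linarith
  have hΔ : 0 < Δ := hδ.trans_le ((hgap 0).1.trans (hgap 0).2)
  have hpt : ∀ x, localPart t L f w x ^ p
      ≤ ENNReal.ofReal (w / δ) * ∫⁻ v in Ioc 0 (Δ / w), ‖f (x + v) - f x‖ₑ ^ p := by
    intro x
    refine (rpow_avg_le hp _ (tsum_ofReal_eq_one hLnonneg hLsum (w * x)) _
      (fun k => by fun_prop)).trans ?_
    rw [← one_mul (ENNReal.ofReal (w / δ) * _),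
      ← tsum_ofReal_eq_one hLnonneg hLsum (w * x), ← ENNReal.tsum_mul_right]
    refine ENNReal.tsum_le_tsum fun k => ?_
    gcongr
    have hd : 0 < t (k + 1) - t k := hδ.trans_le (hgap k).1
    have := lintegral_unit_comp_affine (F := fun v => ‖f (x + v) - f x‖ₑ ^ p) (by fun_prop) 0
      (div_pos hd hw)
    simp only [zero_add] at this
    rw [this, inv_div]
    have h1 := (hgap k).1
    have h2 := (hgap k).2
    gcongr
  calc _ ≤ ∫⁻ x, ENNReal.ofReal (w / δ) * ∫⁻ v in Ioc 0 (Δ / w), ‖f (x + v) - f x‖ₑ ^ p :=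
        lintegral_mono hpt
    _ = ENNReal.ofReal (w / δ) * ∫⁻ v in Ioc 0 (Δ / w), ∫⁻ x, ‖f (x + v) - f x‖ₑ ^ p := by
        rw [lintegral_const_mul' _ _ ENNReal.ofReal_ne_top, lintegral_lintegral_swap]
        exact (by fun_prop : Measurable (fun z : ℝ × ℝ =>
          ‖f (z.1 + z.2) - f z.1‖ₑ ^ p)).aemeasurable
    _ ≤ ENNReal.ofReal (w / δ) * ∫⁻ v in Ioc 0 (Δ / w),
          ENNReal.ofReal (omegaP p f (Δ / w)) ^ p := by
        refine mul_le_mul_right (setLIntegral_mono measurable_const fun v hv => ?_) _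
        rw [← shiftDist_rpow hp]
        refine ENNReal.rpow_le_rpow (shiftDist_le_omegaP hp hfL ?_) hp0.le
        rw [abs_of_pos hv.1]
        exact hv.2
    _ = _ := by
        rw [setLIntegral_const, Real.volume_Ioc, sub_zero, mul_comm (_ ^ p), ← mul_assoc,
          ← ENNReal.ofReal_mul (by positivity)]
        congr 2
        field_simp

/-- Substituting `y = w x - t_k` turns the sum over `k` into a sum of means over the cells of one
function of `u` for each `y`, namely `|f (u + y/w) - f u|^p`. -/
lemma lintegral_nodePart_le_shift {t : ℤ → ℝ} {δ : ℝ} (hδ : 0 < δ)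
    (hgap : ∀ k : ℤ, δ ≤ t (k + 1) - t k) {L f : ℝ → ℝ}
    (hL : Measurable L) (hLnonneg : ∀ x, 0 ≤ L x)
    (hLsum : ∀ u : ℝ, HasSum (fun k : ℤ => L (u - t k)) 1)
    {p : ℝ} (hp : 1 ≤ p) (hf : Measurable f) {w : ℝ} (hw : 0 < w) :
    ∫⁻ x, nodePart t L f w x ^ p
      ≤ ENNReal.ofReal δ⁻¹ * ∫⁻ y, ENNReal.ofReal (L y) * shiftDist p f (y / w) ^ p := by
  -- `H y u` is the integrand after the substitution `y = w x - t_k`; it no longer depends on `k`.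
  set H : ℝ → ℝ → ENNReal := fun y u => ‖f (u + y / w) - f u‖ₑ ^ p with hH
  have hHm : Measurable (fun z : ℝ × ℝ => H z.1 z.2) := by
    simp only [hH]; fun_prop
  set J : ℤ → ℝ → ENNReal := fun k y => ∫⁻ s in Ioc (0 : ℝ) 1,
    H y (t k / w + (t (k + 1) - t k) / w * s) with hJ
  have hJm : ∀ k, Measurable (J k) := fun k =>
    Measurable.lintegral_prod_right' (f := fun z : ℝ × ℝ =>
      H z.1 (t k / w + (t (k + 1) - t k) / w * z.2)) (by simp only [hH]; fun_prop)
  have hpt : ∀ x, nodePart t L f w x ^ p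
      ≤ ∑' k, ENNReal.ofReal (L (-t k + w * x)) * J k (-t k + w * x) := by
    intro x
    refine (rpow_avg_le hp _ (tsum_ofReal_eq_one hLnonneg hLsum (w * x)) _
      (fun k => by fun_prop)).trans (le_of_eq ?_)
    refine tsum_congr fun k => ?_
    rw [sub_eq_neg_add]
    congr 1
    refine lintegral_congr fun s => ?_
    simp only [hH]
    rw [← enorm_neg, neg_sub]
    congr 4
    field_simp
    ring
  calc _ ≤ ∫⁻ x, ∑' k, ENNReal.ofReal (L (-t k + w * x)) * J k (-t k + w * x) :=
        lintegral_mono hpt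
    _ = ∑' k, ENNReal.ofReal w⁻¹ * ∫⁻ y, ENNReal.ofReal (L y) * J k y := by
        rw [lintegral_tsum (fun k => by have := hJm k; fun_prop)]
        refine tsum_congr fun k => ?_
        exact lintegral_comp_affine (F := fun y => ENNReal.ofReal (L y) * J k y)
          (by have := hJm k; fun_prop) (-t k) hw
    _ = ENNReal.ofReal w⁻¹ * ∫⁻ y, ENNReal.ofReal (L y) * ∑' k, J k y := by
        rw [ENNReal.tsum_mul_left, ← lintegral_tsum (fun k => by have := hJm k; fun_prop)]
        simp only [ENNReal.tsum_mul_left]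
    _ ≤ ENNReal.ofReal w⁻¹ * ∫⁻ y, ENNReal.ofReal (w / δ) *
          (ENNReal.ofReal (L y) * shiftDist p f (y / w) ^ p) := by
        refine mul_le_mul_right (lintegral_mono fun y => ?_) _
        rw [mul_left_comm]
        refine mul_le_mul_right ?_ _
        rw [shiftDist_rpow hp]
        exact tsum_cells_le hδ hgap hw (F := H y) (by simp only [hH]; fun_prop)
    _ = _ := by
        rw [lintegral_const_mul' _ _ ENNReal.ofReal_ne_top, ← mul_assoc,
          ← ENNReal.ofReal_mul (by positivity)]
        congr 2
        field_simp

lemma lintegral_nodePart_le {t : ℤ → ℝ} {δ : ℝ} (hδ : 0 < δ)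
    (hgap : ∀ k : ℤ, δ ≤ t (k + 1) - t k) {L f : ℝ → ℝ}
    (hL : Measurable L) (hLnonneg : ∀ x, 0 ≤ L x) (hL1 : Integrable L)
    (hLsum : ∀ u : ℝ, HasSum (fun k : ℤ => L (u - t k)) 1)
    {p : ℝ} (hp : 1 ≤ p) (hMp : Integrable (fun u : ℝ => L u * |u| ^ p))
    (hf : Measurable f)
    (hfL : MemLp f (ENNReal.ofReal p) volume) {w : ℝ} (hw : 0 < w) :
    ∫⁻ x, nodePart t L f w x ^ p
      ≤ ENNReal.ofReal (δ⁻¹ * 2 ^ (p - 1) * ((∫ u : ℝ, L u) + ∫ u : ℝ, L u * |u| ^ p))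
        * ENNReal.ofReal (omegaP p f (1 / w)) ^ p := by
  have hp0 : 0 < p := by linarith
  have hM0 : ∀ u, 0 ≤ L u * |u| ^ p := fun u =>
    mul_nonneg (hLnonneg u) (Real.rpow_nonneg (abs_nonneg _) _)
  set K := ENNReal.ofReal (omegaP p f (1 / w)) ^ p with hK
  have hKtop : K ≠ ⊤ := ENNReal.rpow_ne_top_of_nonneg hp0.le ENNReal.ofReal_ne_top
  refine (lintegral_nodePart_le_shift hδ hgap hL hLnonneg hLsum hp hf hw).trans ?_
  have hpt : ∀ y, ENNReal.ofReal (L y) * shiftDist p f (y / w) ^ p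
      ≤ ENNReal.ofReal (2 ^ (p - 1)) *
        (ENNReal.ofReal (L y) + ENNReal.ofReal (L y * |y| ^ p)) * K := by
    intro y
    calc _ ≤ ENNReal.ofReal (L y) * ((1 + ENNReal.ofReal |y|) ^ p * K) := by
          rw [hK, ← ENNReal.mul_rpow_of_nonneg _ _ hp0.le]
          gcongr
          exact shiftDist_le_one_add hp hfL hw y
      _ ≤ ENNReal.ofReal (L y) *
            ((2 ^ (p - 1) * (1 ^ p + ENNReal.ofReal |y| ^ p)) * K) := by
          gcongr
          exact ENNReal.rpow_add_le_mul_rpow_add_rpow _ _ hp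
      _ = _ := by
          rw [ENNReal.ofReal_mul (hLnonneg y), ENNReal.one_rpow,
            ENNReal.ofReal_rpow_of_nonneg (abs_nonneg y) hp0.le,
            ← ENNReal.ofReal_rpow_of_pos two_pos, ENNReal.ofReal_ofNat]
          ring
  refine (mul_le_mul_right (lintegral_mono hpt) _).trans (le_of_eq ?_)
  rw [lintegral_mul_const' _ _ hKtop, lintegral_const_mul' _ _ ENNReal.ofReal_ne_top,
    lintegral_add_left (by fun_prop),
    ← ofReal_integral_eq_lintegral_ofReal hL1 (ae_of_all _ hLnonneg),
    ← ofReal_integral_eq_lintegral_ofReal hMp (ae_of_all _ hM0),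
    ← ENNReal.ofReal_add (integral_nonneg hLnonneg) (integral_nonneg hM0),
    ← ENNReal.ofReal_mul (by positivity), ← mul_assoc, ← ENNReal.ofReal_mul (by positivity),
    mul_assoc δ⁻¹]

/-- No measurability of `g` is required: if `|g|^p` is not integrable,
then `pNorm p g = 0`. -/
lemma ofReal_pNorm_le {p : ℝ} (hp : 1 ≤ p) (g : ℝ → ℝ) :
    ENNReal.ofReal (pNorm p g) ≤ (∫⁻ x, ‖g x‖ₑ ^ p) ^ (1 / p) := by
  have hp0 : 0 < p := by linarith
  have h0 : ∀ x, 0 ≤ |g x| ^ p := fun x => Real.rpow_nonneg (abs_nonneg _) _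
  rw [pNorm, ← ENNReal.ofReal_rpow_of_nonneg (integral_nonneg h0) (by positivity)]
  gcongr
  by_cases hi : Integrable (fun x => |g x| ^ p)
  · rw [ofReal_integral_eq_lintegral_ofReal hi (ae_of_all _ h0)]
    refine lintegral_mono fun x => ?_
    rw [← ENNReal.ofReal_rpow_of_nonneg (abs_nonneg _) hp0.le, ← Real.norm_eq_abs,
      ofReal_norm]
  · simp [integral_undef hi]

lemma rpow_inv_ofReal_mul {p : ℝ} (hp : 1 ≤ p) {c ω : ℝ} (hc : 0 ≤ c) :
    (ENNReal.ofReal c * ENNReal.ofReal ω ^ p) ^ (1 / p)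
      = ENNReal.ofReal (c ^ (1 / p)) * ENNReal.ofReal ω := by
  have hp0 : 0 < p := by linarith
  rw [ENNReal.mul_rpow_of_nonneg _ _ (by positivity), ← ENNReal.rpow_mul,
    mul_one_div_cancel hp0.ne', ENNReal.rpow_one,
    ENNReal.ofReal_rpow_of_nonneg hc (by positivity)]

/-! ### The estimate -/

/-- Corollary: quantitative estimate in `L^p(ℝ)` for the linear sampling
Kantorovich operators. -/
theorem quantitative_estimate_lp_linear
    (t : ℤ → ℝ) (δ Δ : ℝ) (hδ : 0 < δ) (hδΔ : δ ≤ Δ)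
    (hgap : ∀ k : ℤ, δ ≤ t (k + 1) - t k ∧ t (k + 1) - t k ≤ Δ)
    (htop : Tendsto t atTop atTop) (hbot : Tendsto t atBot atBot)
    (L : ℝ → ℝ)
    (hLmeas : Measurable L) (hLnonneg : ∀ x : ℝ, 0 ≤ L x)
    -- (L1)
    (hL1 : Integrable L)
    (hLbd : ∃ ε > (0 : ℝ), ∃ B : ℝ, ∀ x : ℝ, |x| ≤ ε → L x ≤ B)
    -- (L2)
    (hL2 : ∃ β₀ > (0 : ℝ), dMoment t L β₀ < ⊤)
    -- partition of unity
    (hLsum : ∀ u : ℝ, HasSum (fun k : ℤ => L (u - t k)) 1)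
    -- M_p(L) < +∞
    (p : ℝ) (hp : 1 ≤ p)
    (hMp : Integrable (fun u : ℝ => L u * |u| ^ p))
    -- f ∈ L^p(ℝ)
    (f : ℝ → ℝ) (hfmeas : Measurable f) (hfloc : LocallyIntegrable f)
    (hfp : Integrable (fun x : ℝ => |f x| ^ p))
    -- the series defining `S*_w f` converges everywhere
    (hconv : ∀ w > (0 : ℝ), ∀ x : ℝ, Summable (fun k : ℤ => L (w * x - t k) *
      ((w / (t (k + 1) - t k)) * ∫ u in (t k / w)..(t (k + 1) / w), f u))) :
    ∃ W : ℝ, ∀ w ≥ W,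
      pNorm p (fun x => SwLin t L f w x - f x) ≤
        δ ^ (-(1 / p)) * (2 * m0R t L) ^ ((p - 1) / p)
            * ((∫ u : ℝ, L u) + ∫ u : ℝ, L u * |u| ^ p) ^ (1 / p)
            * omegaP p f (1 / w)
        + δ ^ (-(1 / p)) * m0R t L * Δ ^ (1 / p) * omegaP p f (Δ / w) := by
  refine ⟨1, fun w hw1 => ?_⟩
  have hw : 0 < w := by linarith
  have hp0 : 0 < p := by linarith
  have hΔ : 0 < Δ := hδ.trans_le hδΔ
  have hfL := memLp_of_integrable hp hfmeas hfp
  have ht : ∀ k, t k < t (k + 1) := fun k => by linarith [(hgap k).1]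
  have hM : 0 ≤ (∫ u : ℝ, L u) + ∫ u : ℝ, L u * |u| ^ p :=
    add_nonneg (integral_nonneg hLnonneg) (integral_nonneg fun u =>
      mul_nonneg (hLnonneg u) (Real.rpow_nonneg (abs_nonneg _) _))
  have hω1 := omegaP_nonneg p f (1 / w)
  have hω2 := omegaP_nonneg p f (Δ / w)
  rw [m0R_eq_one hLnonneg hLsum, mul_one, mul_one]
  have hδp : δ ^ (-(1 / p)) = δ⁻¹ ^ (1 / p) := by
    rw [Real.rpow_neg hδ.le, Real.inv_rpow hδ.le]
  have c1 : δ ^ (-(1 / p)) * 2 ^ ((p - 1) / p)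
        * ((∫ u : ℝ, L u) + ∫ u : ℝ, L u * |u| ^ p) ^ (1 / p)
      = (δ⁻¹ * 2 ^ (p - 1) * ((∫ u : ℝ, L u) + ∫ u : ℝ, L u * |u| ^ p)) ^ (1 / p) := by
    rw [Real.mul_rpow (by positivity) hM, Real.mul_rpow (by positivity) (by positivity), hδp,
      ← Real.rpow_mul two_pos.le, mul_one_div]
  have c2 : δ ^ (-(1 / p)) * Δ ^ (1 / p) = (Δ / δ) ^ (1 / p) := by
    rw [hδp, ← Real.mul_rpow (by positivity) hΔ.le, div_eq_inv_mul Δ δ]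
  rw [c1, c2]
  rw [← ENNReal.ofReal_le_ofReal_iff (by positivity)]
  calc ENNReal.ofReal (pNorm p (fun x => SwLin t L f w x - f x))
      ≤ (∫⁻ x, ‖SwLin t L f w x - f x‖ₑ ^ p) ^ (1 / p) := ofReal_pNorm_le hp _
    _ ≤ (∫⁻ x, (nodePart t L f w + localPart t L f w) x ^ p) ^ (1 / p) := by
        gcongr with x
        exact enorm_SwLin_sub_le ht hLnonneg hLsum hfmeas hfloc hw x (hconv w hw x)
    _ ≤ (∫⁻ x, nodePart t L f w x ^ p) ^ (1 / p) + (∫⁻ x, localPart t L f w x ^ p) ^ (1 / p) :=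
        ENNReal.lintegral_Lp_add_le (measurable_nodePart t hLmeas hfmeas w).aemeasurable
          (measurable_localPart t hLmeas hfmeas w).aemeasurable hp
    _ ≤ _ := by
        rw [ENNReal.ofReal_add (by positivity) (by positivity),
          ENNReal.ofReal_mul (by positivity), ENNReal.ofReal_mul (by positivity),
          ← rpow_inv_ofReal_mul hp (by positivity), ← rpow_inv_ofReal_mul hp (by positivity)]
        gcongr
        · exact lintegral_nodePart_le hδ (fun k => (hgap k).1) hLmeas hLnonneg hL1 hLsum hp hMp
            hfmeas hfL hw
        · exact lintegral_localPart_le hδ hgap hLnonneg hLsum hp hfmeas hfL hw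
end
end
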